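/- Let d ≥ 1 and a > 2b > 0, let Q be the radial ground state, and let v : [0,∞) → ℝ be the unique solution of the linearized equation v'' + ((d−1)/r)v' + F'(Q)v = 0 with v(0) = 1 and v'(0) = 0. Then |v(r)| diverges exponentially fast as r → ∞; more precisely, if d ≥ 2 there exist constants c > 0 and ε > 0 such that v(r) ≤ −c·e^{εr} and v'(r) ≤ −c·e^{εr} for all sufficiently large r, so that v(r) → −∞ and v'(r) → −∞ exponentially fast. -/

import Mathlib

open Real Filter

noncomputable section

/-- The nonlinearity `F(x) = (a/2)·sin(2x)·(sin²x − b/a)`. -/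
def Fnl (a b x : ℝ) : ℝ := (a / 2) * Real.sin (2 * x) * (Real.sin x ^ 2 - b / a)

/-- `u` solves the radial ODE `u'' + ((d−1)/r)u' + F(u) = 0` on `(0,∞)` with `u'(0) = 0`. -/
def IsRadialSol (d : ℕ) (a b : ℝ) (u : ℝ → ℝ) : Prop :=
  ContDiff ℝ 2 u ∧ deriv u 0 = 0 ∧
  ∀ r : ℝ, 0 < r →
    deriv (deriv u) r + (((d : ℝ) - 1) / r) * deriv u r + Fnl a b (u r) = 0

/-- `v` solves the linearized equation `v'' + ((d−1)/r)v' + F'(w)v = 0`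
with `v(0) = 1`, `v'(0) = 0`. -/
def IsLinearizedSol (d : ℕ) (a b : ℝ) (w v : ℝ → ℝ) : Prop :=
  ContDiff ℝ 2 v ∧ v 0 = 1 ∧ deriv v 0 = 0 ∧
  ∀ r : ℝ, 0 < r →
    deriv (deriv v) r + (((d : ℝ) - 1) / r) * deriv v r
      + deriv (Fnl a b) (w r) * v r = 0

/-!
Both conclusions come from comparing `v` with explicit solutions of the linearized equation through
Wronskians. The mass `-F'(0) > 0` forces `Q` to decay exponentially and leaves a trichotomy for
`v`: either `v, v'` or `-v, -v'` grow exponentially, or `v` and `v'` are bounded, in which case each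
of these Wronskians tends to `0` at infinity.

The translation mode `Q'` solves the linearized equation up to a term of definite sign, so its
Wronskian with `v` is strictly monotone while `v > 0`. Hence `v` has a first zero `ρ`. The scaling
mode `r Q' + c Q`, with `c` chosen to vanish at `ρ`, solves it with source
`c Q F'(Q) - (c + 2) F(Q)`, which changes sign only once because `x F'(x) / F(x)` is decreasing;
past `ρ` the mode itself is negative, since `r Q' / Q` is strictly decreasing by a Pohozaev
identity. The Wronskian with the scaling mode, which vanishes at `ρ`, therefore excludes both a
second zero of `v` and the boundedness of `v`. In dimension one the translation Wronskian is
constant and nonzero, which rules out boundedness directly.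
-/

open Set Topology Asymptotics

section Calculus

lemma le_of_antitoneOn_Ici_of_tendsto {f : ℝ → ℝ} {R l x : ℝ} (hf : AntitoneOn f (Ici R))
    (hlim : Tendsto f atTop (𝓝 l)) (hx : R ≤ x) : l ≤ f x := by
  refine le_of_tendsto hlim ?_
  filter_upwards [eventually_ge_atTop x] with y hxy using hf hx (hx.trans hxy) hxy

lemma lt_of_strictAntiOn_Ici_of_tendsto {f : ℝ → ℝ} {R l x : ℝ} (hf : StrictAntiOn f (Ici R))
    (hlim : Tendsto f atTop (𝓝 l)) (hx : R ≤ x) : l < f x :=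
  (le_of_antitoneOn_Ici_of_tendsto hf.antitoneOn hlim (hx.trans (lt_add_one x).le)).trans_lt
    (hf hx (hx.trans (lt_add_one x).le) (lt_add_one x))

lemma pos_of_tendsto_zero_of_deriv_sign {f f' : ℝ → ℝ} (hf : Continuous f) (hf₀ : f 0 = 0)
    (hlim : Tendsto f atTop (𝓝 0)) (hderiv : ∀ r, 0 < r → HasDerivAt f (f' r) r)
    (hsign : ∀ s r, 0 < s → s < r → 0 ≤ f' r → 0 < f' s) {r : ℝ} (hr : 0 < r) : 0 < f r := by
  rcases le_or_gt 0 (f' r) with hnonneg | hneg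
  · have hmono : StrictMonoOn f (Icc 0 r) := by
      refine strictMonoOn_of_hasDerivWithinAt_pos (f' := f') (convex_Icc 0 r) hf.continuousOn
        (fun s hs => ?_) (fun s hs => ?_) <;> rw [interior_Icc] at hs
      · exact (hderiv s hs.1).hasDerivWithinAt
      · exact hsign s r hs.1 hs.2 hnonneg
    simpa only [hf₀] using hmono (left_mem_Icc.2 hr.le) (right_mem_Icc.2 hr.le) hr
  · have hanti : StrictAntiOn f (Ici r) := by
      refine strictAntiOn_of_hasDerivWithinAt_neg (f' := f') (convex_Ici r) hf.continuousOn
        (fun s hs => ?_) (fun s hs => ?_) <;> rw [interior_Ici] at hs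
      · exact (hderiv s (hr.trans hs)).hasDerivWithinAt
      · exact not_le.1 fun hs' => (hsign r s hr hs hs').not_gt hneg
    exact lt_of_strictAntiOn_Ici_of_tendsto hanti hlim le_rfl

lemma exists_first_zero {f : ℝ → ℝ} {x y : ℝ} (hf : ContinuousOn f (Icc x y)) (hxy : x ≤ y)
    (hx : 0 < f x) (hy : f y ≤ 0) : ∃ z ∈ Ioc x y, f z = 0 ∧ ∀ t ∈ Ico x z, 0 < f t := by
  have hcompact : IsCompact (Icc x y ∩ f ⁻¹' Iic 0) :=
    isCompact_Icc.of_isClosed_subset (hf.preimage_isClosed_of_isClosed isClosed_Icc isClosed_Iic)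
      inter_subset_left
  obtain ⟨z, ⟨hz, hfz⟩, hleast⟩ := hcompact.exists_isLeast ⟨y, right_mem_Icc.2 hxy, hy⟩
  have hpos : ∀ t ∈ Ico x z, 0 < f t := fun t ht =>
    not_le.1 fun hft => (hleast ⟨⟨ht.1, ht.2.le.trans hz.2⟩, hft⟩).not_gt ht.2
  have hxz : x < z := hz.1.lt_of_ne (by rintro rfl; exact hx.not_ge hfz)
  obtain ⟨t, ht, hft⟩ := intermediate_value_Icc' hz.1 (hf.mono (Icc_subset_Icc_right hz.2))
    ⟨hfz, hx.le⟩
  rcases ht.2.eq_or_lt with rfl | htz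
  · exact ⟨t, ⟨hxz, hz.2⟩, hft, hpos⟩
  · exact absurd hft (hpos t ⟨ht.1, htz⟩).ne'

lemma eventually_neg_nhdsGT_of_deriv_neg {f : ℝ → ℝ} {x : ℝ} (hf : deriv f x < 0) (hx : f x = 0) :
    ∀ᶠ y in 𝓝[>] x, f y < 0 := by
  filter_upwards [(eventually_nhdsWithin_sign_eq_of_deriv_neg hf hx).filter_mono
    nhdsWithin_le_nhds, self_mem_nhdsWithin] with y hsign hxy
  rwa [sign_neg (sub_neg.2 hxy), sign_eq_neg_one_iff] at hsign

lemma eventually_pos_nhdsLT_of_deriv_neg {f : ℝ → ℝ} {x : ℝ} (hf : deriv f x < 0) (hx : f x = 0) :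
    ∀ᶠ y in 𝓝[<] x, 0 < f y := by
  filter_upwards [(eventually_nhdsWithin_sign_eq_of_deriv_neg hf hx).filter_mono
    nhdsWithin_le_nhds, self_mem_nhdsWithin] with y hsign hyx
  rwa [sign_pos (sub_pos.2 hyx), sign_eq_one_iff] at hsign

lemma hasDerivAt_pow_of_ne_zero (n : ℕ) {r : ℝ} (hr : r ≠ 0) :
    HasDerivAt (fun s : ℝ => s ^ n) (n / r * r ^ n) r := by
  refine (hasDerivAt_pow n r).congr_deriv ?_
  rcases n with _ | n
  · simp
  · rw [Nat.add_sub_cancel]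
    field_simp
    ring

lemma tendsto_pow_mul_exp_neg_mul_atTop (k : ℕ) {ε : ℝ} (hε : 0 < ε) :
    Tendsto (fun r : ℝ => r ^ k * exp (-ε * r)) atTop (𝓝 0) := by
  refine (isLittleO_pow_exp_pos_mul_atTop k hε).tendsto_div_nhds_zero.congr fun r => ?_
  rw [neg_mul, exp_neg, div_eq_mul_inv]

lemma tendsto_pow_mul_of_isBigO_exp_neg {f : ℝ → ℝ} {ε : ℝ} (hε : 0 < ε)
    (hf : f =O[atTop] fun r => exp (-ε * r)) (k : ℕ) :
    Tendsto (fun r => r ^ k * f r) atTop (𝓝 0) :=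
  ((isBigO_refl (fun r : ℝ => r ^ k) atTop).mul hf).trans_tendsto
    (tendsto_pow_mul_exp_neg_mul_atTop k hε)

end Calculus

/-- `f` dominates a positive multiple of an increasing exponential near `+∞`. -/
def GrowsExponentially (f : ℝ → ℝ) : Prop :=
  ∃ c > (0 : ℝ), ∃ ε > (0 : ℝ), ∀ᶠ r in atTop, c * exp (ε * r) ≤ f r

namespace GrowsExponentially

lemma mono {f g : ℝ → ℝ} (hf : GrowsExponentially f) (hfg : ∀ r, f r ≤ g r) :
    GrowsExponentially g := by
  obtain ⟨c, hc, ε, hε, h⟩ := hf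
  exact ⟨c, hc, ε, hε, h.mono fun r hr => hr.trans (hfg r)⟩

lemma tendsto_atTop {f : ℝ → ℝ} (hf : GrowsExponentially f) : Tendsto f atTop atTop := by
  obtain ⟨c, hc, ε, hε, h⟩ := hf
  exact tendsto_atTop_mono' _ h
    ((tendsto_exp_atTop.comp (tendsto_id.const_mul_atTop hε)).const_mul_atTop hc)

end GrowsExponentially

section ExponentialGrowth

variable {n : ℕ} {R κ : ℝ} {y u m : ℝ → ℝ}

lemma mul_pos_of_radial_growth (hR : 0 < R) (hm : ∀ r, R ≤ r → 0 ≤ m r)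
    (hy : ∀ r, R ≤ r → HasDerivAt y (u r) r)
    (hu : ∀ r, R ≤ r → HasDerivAt u (-(n / r) * u r + m r * y r) r)
    (hyu : 0 < y R * u R) {r : ℝ} (hr : R ≤ r) : 0 < y r * u r := by
  have hderiv : ∀ s, R ≤ s → HasDerivAt (fun s => s ^ n * (y s * u s))
      (s ^ n * (u s ^ 2 + m s * y s ^ 2)) s := fun s hs => by
    have hs₀ : s ≠ 0 := (hR.trans_le hs).ne'
    refine ((hasDerivAt_pow_of_ne_zero n hs₀).mul ((hy s hs).mul (hu s hs))).congr_deriv ?_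
    simp only [Pi.mul_apply]
    ring
  have hmono : MonotoneOn (fun s => s ^ n * (y s * u s)) (Ici R) := by
    refine monotoneOn_of_hasDerivWithinAt_nonneg (convex_Ici R)
      (fun s hs => (hderiv s hs).continuousAt.continuousWithinAt)
      (fun s hs => (hderiv s (interior_subset hs)).hasDerivWithinAt) fun s hs => ?_
    have hs := interior_subset hs
    have := hR.trans_le hs
    have := hm s hs
    positivity
  have hpos : 0 < r ^ n * (y r * u r) :=
    (mul_pos (pow_pos hR n) hyu).trans_le (hmono self_mem_Ici hr hr)
  exact pos_of_mul_pos_right hpos (pow_nonneg (hR.le.trans hr) n)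

lemma pos_of_radial_growth (hR : 0 < R) (hm : ∀ r, R ≤ r → 0 ≤ m r)
    (hy : ∀ r, R ≤ r → HasDerivAt y (u r) r)
    (hu : ∀ r, R ≤ r → HasDerivAt u (-(n / r) * u r + m r * y r) r)
    (hyR : 0 < y R) (huR : 0 < u R) {r : ℝ} (hr : R ≤ r) : 0 < y r ∧ 0 < u r := by
  have hyu : ∀ s, R ≤ s → 0 < y s * u s := fun s hs =>
    mul_pos_of_radial_growth hR hm hy hu (mul_pos hyR huR) hs
  have hyr : 0 < y r := by
    by_contra! hyr
    obtain ⟨s, hs, hys⟩ := intermediate_value_Icc' hr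
      (fun t ht => (hy t ht.1).continuousAt.continuousWithinAt) ⟨hyr, hyR.le⟩
    exact (hyu s hs.1).ne' (by rw [hys, zero_mul])
  exact ⟨hyr, pos_of_mul_pos_right (hyu r hr) hyr.le⟩

-- `u - ε y` satisfies `(u - ε y)' ≥ -(n / R + ε) (u - ε y)` once `ε (n / R + ε) ≤ κ`.
lemma mul_le_deriv_of_radial_growth {ε : ℝ} (hR : 0 < R) (hκ : 0 < κ) (hm : ∀ r, R ≤ r → κ ≤ m r)
    (hy : ∀ r, R ≤ r → HasDerivAt y (u r) r)
    (hu : ∀ r, R ≤ r → HasDerivAt u (-(n / r) * u r + m r * y r) r)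
    (hyR : 0 < y R) (huR : 0 < u R) (hεκ : ε * (n / R + ε) ≤ κ) (hεR : ε * y R ≤ u R)
    {r : ℝ} (hr : R ≤ r) : ε * y r ≤ u r := by
  set K : ℝ := n / R + ε
  have hderiv : ∀ s, R ≤ s → HasDerivAt (fun s => (u s - ε * y s) * exp (K * s))
      ((-(n / s) * u s + m s * y s - ε * u s + K * (u s - ε * y s)) * exp (K * s)) s :=
    fun s hs => by
      refine (((hu s hs).sub ((hy s hs).const_mul ε)).mul
        ((hasDerivAt_id s).const_mul K).exp).congr_deriv ?_
      simp only [Pi.sub_apply, id]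
      ring
  have hmono : MonotoneOn (fun s => (u s - ε * y s) * exp (K * s)) (Ici R) := by
    refine monotoneOn_of_hasDerivWithinAt_nonneg (convex_Ici R)
      (fun s hs => (hderiv s hs).continuousAt.continuousWithinAt)
      (fun s hs => (hderiv s (interior_subset hs)).hasDerivWithinAt) fun s hs => ?_
    have hs : R ≤ s := interior_subset hs
    obtain ⟨hys, hus⟩ :=
      pos_of_radial_growth hR (fun t ht => hκ.le.trans (hm t ht)) hy hu hyR huR hs
    have hdamping : n / s * u s ≤ n / R * u s := by gcongr
    have hmass : ε * K * y s ≤ m s * y s := by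
      gcongr
      exact hεκ.trans (hm s hs)
    refine mul_nonneg ?_ (exp_pos _).le
    linarith
  have hstart : 0 ≤ (u R - ε * y R) * exp (K * R) :=
    mul_nonneg (sub_nonneg.2 hεR) (exp_pos _).le
  exact sub_nonneg.1 (nonneg_of_mul_nonneg_left (hstart.trans (hmono self_mem_Ici hr hr))
    (exp_pos _))

lemma mul_exp_le_of_mul_le_deriv {ε : ℝ} (hy : ∀ r, R ≤ r → HasDerivAt y (u r) r)
    (hyu : ∀ r, R ≤ r → ε * y r ≤ u r) {r : ℝ} (hr : R ≤ r) :
    y R * exp (-ε * R) * exp (ε * r) ≤ y r := by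
  have hderiv : ∀ s, R ≤ s → HasDerivAt (fun s => y s * exp (-ε * s))
      ((u s - ε * y s) * exp (-ε * s)) s := fun s hs => by
    refine ((hy s hs).mul ((hasDerivAt_id s).const_mul (-ε)).exp).congr_deriv ?_
    simp only [id]
    ring
  have hmono : MonotoneOn (fun s => y s * exp (-ε * s)) (Ici R) :=
    monotoneOn_of_hasDerivWithinAt_nonneg (convex_Ici R)
      (fun s hs => (hderiv s hs).continuousAt.continuousWithinAt)
      (fun s hs => (hderiv s (interior_subset hs)).hasDerivWithinAt)
      fun s hs => mul_nonneg (sub_nonneg.2 (hyu s (interior_subset hs))) (exp_pos _).le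
  calc y R * exp (-ε * R) * exp (ε * r) ≤ y r * exp (-ε * r) * exp (ε * r) :=
        mul_le_mul_of_nonneg_right (hmono self_mem_Ici hr hr) (exp_pos _).le
    _ = y r := by rw [mul_assoc, ← exp_add, neg_mul, neg_add_cancel, exp_zero, mul_one]

lemma growsExponentially_of_radial_growth (hR : 0 < R) (hκ : 0 < κ) (hm : ∀ r, R ≤ r → κ ≤ m r)
    (hy : ∀ r, R ≤ r → HasDerivAt y (u r) r)
    (hu : ∀ r, R ≤ r → HasDerivAt u (-(n / r) * u r + m r * y r) r)
    (hyR : 0 < y R) (huR : 0 < u R) : GrowsExponentially fun r => min (y r) (u r) := by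
  obtain ⟨ε, hε, hε₁, hεR, hεκ⟩ : ∃ ε : ℝ, 0 < ε ∧ ε ≤ 1 ∧ ε ≤ u R / y R ∧ ε ≤ κ / (n / R + 1) :=
    ⟨min 1 (min (u R / y R) (κ / (n / R + 1))), by positivity, min_le_left _ _,
      (min_le_right _ _).trans (min_le_left _ _), (min_le_right _ _).trans (min_le_right _ _)⟩
  rw [le_div_iff₀ hyR] at hεR
  rw [le_div_iff₀ (by positivity)] at hεκ
  have hyu : ∀ r, R ≤ r → ε * y r ≤ u r := fun r hr =>
    mul_le_deriv_of_radial_growth hR hκ hm hy hu hyR huR (le_trans (by gcongr) hεκ) hεR hr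
  have hy_exp : ∀ r, R ≤ r → y R * exp (-ε * R) * exp (ε * r) ≤ y r := fun r hr =>
    mul_exp_le_of_mul_le_deriv hy hyu hr
  refine ⟨ε * (y R * exp (-ε * R)), by positivity, ε, hε, ?_⟩
  filter_upwards [eventually_ge_atTop R] with r hr
  have hεy : ε * (y R * exp (-ε * R)) * exp (ε * r) ≤ ε * y r := by
    rw [mul_assoc]
    exact mul_le_mul_of_nonneg_left (hy_exp r hr) hε.le
  have hyr : 0 < y r := lt_of_lt_of_le (by positivity) (hy_exp r hr)
  exact le_min (hεy.trans (mul_le_of_le_one_left hyr.le hε₁)) (hεy.trans (hyu r hr))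

end ExponentialGrowth

section Nonlinearity

/-- The primitive `∫₀ˣ F` of the nonlinearity that vanishes at the origin. -/
def potential (F : ℝ → ℝ) (x : ℝ) : ℝ := ∫ t in (0 : ℝ)..x, F t

lemma potential_zero (F : ℝ → ℝ) : potential F 0 = 0 := intervalIntegral.integral_same

lemma hasDerivAt_potential {F : ℝ → ℝ} (hF : Continuous F) (x : ℝ) :
    HasDerivAt (potential F) (F x) x :=
  (hF.integral_hasStrictDerivAt 0 x).hasDerivAt

lemma hasDerivAt_potential_sub {F : ℝ → ℝ} (hF : Differentiable ℝ F) (α μ x : ℝ) :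
    HasDerivAt (fun x => (α + μ) * potential F x - α * (x * F x))
      (μ * F x - α * (x * deriv F x)) x := by
  refine (((hasDerivAt_potential hF.continuous x).const_mul (α + μ)).sub
    (((hasDerivAt_id x).mul (hF x).hasDerivAt).const_mul α)).congr_deriv ?_
  simp only [id]
  ring

/-- The linear part of `F` at the equilibrium `0` is `-m²` with `m ≠ 0`, so that solutions of
`u'' + (n/r) u' + F u = 0` tending to `0` decay exponentially. -/
structure IsMassive (F : ℝ → ℝ) : Prop where
  contDiff : ContDiff ℝ 1 F
  map_zero : F 0 = 0
  deriv_zero_neg : deriv F 0 < 0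

/-- The sign and monotonicity conditions of Serrin–Tang type on `(0, M)`: `F` changes sign at most
once, from negative to positive; `F x / x` increases as long as `F ≤ 0`; and the growth exponent
`x F' x / F x` decreases once `F > 0`. -/
structure IsSerrinTang (F : ℝ → ℝ) (M : ℝ) : Prop where
  lt_mul_deriv : ∀ x ∈ Ioo 0 M, F x ≤ 0 → F x < x * deriv F x
  pos_of_nonneg : ∀ x y, 0 < x → x < y → y < M → 0 ≤ F x → 0 < F y
  strictAntiOn : StrictAntiOn (fun x => x * deriv F x / F x) {x ∈ Ioo 0 M | 0 < F x}

lemma IsMassive.differentiable {F : ℝ → ℝ} (hF : IsMassive F) : Differentiable ℝ F :=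
  hF.contDiff.differentiable one_ne_zero

lemma IsMassive.continuous {F : ℝ → ℝ} (hF : IsMassive F) : Continuous F :=
  hF.contDiff.continuous

namespace IsSerrinTang

variable {F : ℝ → ℝ} {M α μ x y : ℝ}

lemma mul_deriv_lt (hST : IsSerrinTang F M) (hα : 0 ≤ α) (hαμ : α ≤ μ) (hμ : 0 < μ)
    (hx : 0 < x) (hxy : x < y) (hy : y < M) (h : α * (x * deriv F x) ≤ μ * F x) :
    α * (y * deriv F y) < μ * F y := by
  rcases hα.eq_or_lt with rfl | hα
  · have hFx : 0 ≤ F x := nonneg_of_mul_nonneg_right (by simpa only [zero_mul] using h) hμ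
    simpa only [zero_mul] using mul_pos hμ (hST.pos_of_nonneg x y hx hxy hy hFx)
  have hFx : 0 < F x := by
    by_contra! hFx
    refine h.not_gt ?_
    calc μ * F x ≤ α * F x := mul_le_mul_of_nonpos_right hαμ hFx
      _ < α * (x * deriv F x) := by gcongr; exact hST.lt_mul_deriv x ⟨hx, hxy.trans hy⟩ hFx
  have hFy : 0 < F y := hST.pos_of_nonneg x y hx hxy hy hFx.le
  have hexponent : y * deriv F y / F y < x * deriv F x / F x :=
    hST.strictAntiOn ⟨⟨hx, hxy.trans hy⟩, hFx⟩ ⟨⟨hx.trans hxy, hy⟩, hFy⟩ hxy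
  calc α * (y * deriv F y) = α * (y * deriv F y / F y) * F y := by field_simp
    _ < α * (x * deriv F x / F x) * F y := by gcongr
    _ = α * (x * deriv F x) / F x * F y := by ring
    _ ≤ μ * F y := by gcongr; exact (div_le_iff₀ hFx).2 h

lemma pos_of_mul_deriv_le (hST : IsSerrinTang F M) (hx : x ∈ Ioo 0 M)
    (h : x * deriv F x ≤ F x) : 0 < F x :=
  not_le.1 fun hFx => (hST.lt_mul_deriv x hx hFx).not_ge h

lemma mul_deriv_lt_of_le_potential (hST : IsSerrinTang F M) (hF : Differentiable ℝ F)
    (hα : 0 ≤ α) (hαμ : α ≤ μ) (hμ : 0 < μ) (hx : x ∈ Ioo 0 M)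
    (h : α * (x * F x) ≤ (α + μ) * potential F x) : α * (x * deriv F x) < μ * F x := by
  obtain ⟨z, hz, hslope⟩ := exists_hasDerivAt_eq_slope _ _ hx.1
    (fun t _ => (hasDerivAt_potential_sub hF α μ t).continuousAt.continuousWithinAt)
    (fun t _ => hasDerivAt_potential_sub hF α μ t)
  refine hST.mul_deriv_lt hα hαμ hμ hz.1 hz.2 hx.2 (sub_nonneg.1 ?_)
  rw [hslope, potential_zero, zero_mul, mul_zero, mul_zero, sub_zero, sub_zero, sub_zero]
  exact div_nonneg (sub_nonneg.2 h) hx.1.le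

lemma lt_potential (hST : IsSerrinTang F M) (hF : Differentiable ℝ F)
    (hα : 0 ≤ α) (hαμ : α ≤ μ) (hμ : 0 < μ) (hx : 0 < x) (hxy : x < y) (hy : y < M)
    (h : α * (x * F x) ≤ (α + μ) * potential F x) : α * (y * F y) < (α + μ) * potential F y := by
  have hmono : StrictMonoOn (fun x => (α + μ) * potential F x - α * (x * F x)) (Icc x y) := by
    refine strictMonoOn_of_hasDerivWithinAt_pos (convex_Icc x y)
      (fun t _ => (hasDerivAt_potential_sub hF α μ t).continuousAt.continuousWithinAt)
      (fun t _ => (hasDerivAt_potential_sub hF α μ t).hasDerivWithinAt) fun t ht => ?_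
    rw [interior_Icc] at ht
    exact sub_pos.2 <| hST.mul_deriv_lt hα hαμ hμ hx ht.1 (ht.2.trans hy)
      (hST.mul_deriv_lt_of_le_potential hF hα hαμ hμ ⟨hx, hxy.trans hy⟩ h).le
  exact sub_pos.1 <| (sub_nonneg.2 h).trans_lt
    (hmono (left_mem_Icc.2 hxy.le) (right_mem_Icc.2 hxy.le) hxy)

lemma pos_of_potential_nonneg (hST : IsSerrinTang F M) (hF : Differentiable ℝ F)
    (hx : x ∈ Ioo 0 M) (h : 0 ≤ potential F x) : 0 < F x := by
  simpa using hST.mul_deriv_lt_of_le_potential hF le_rfl zero_le_one zero_lt_one hx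
    (by simpa using h)

lemma const_mul_comp_mul {A c : ℝ} (hST : IsSerrinTang F M) (hA : 0 < A) (hc : 0 < c) :
    IsSerrinTang (fun x => A * F (c * x)) (M / c) := by
  have hmem : ∀ x, x ∈ Ioo 0 (M / c) → c * x ∈ Ioo 0 M := fun x hx =>
    ⟨mul_pos hc hx.1, by rw [mul_comm]; exact (lt_div_iff₀ hc).1 hx.2⟩
  have hderiv : ∀ x, x * deriv (fun x => A * F (c * x)) x = A * (c * x * deriv F (c * x)) :=
    fun x => by
      rw [deriv_const_mul_field, deriv_comp_mul_left, smul_eq_mul]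
      ring
  refine ⟨fun x hx hle => ?_, fun x y hx hxy hy h => ?_, fun x hx y hy hxy => ?_⟩
  · rw [hderiv]
    exact mul_lt_mul_of_pos_left (hST.lt_mul_deriv _ (hmem x hx)
      (nonpos_of_mul_nonpos_right hle hA)) hA
  · exact mul_pos hA (hST.pos_of_nonneg _ _ (mul_pos hc hx) (mul_lt_mul_of_pos_left hxy hc)
      (hmem y ⟨hx.trans hxy, hy⟩).2 (nonneg_of_mul_nonneg_right h hA))
  · simp only [hderiv, mul_div_mul_left _ _ hA.ne']
    exact hST.strictAntiOn ⟨hmem x hx.1, pos_of_mul_pos_right hx.2 hA.le⟩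
      ⟨hmem y hy.1, pos_of_mul_pos_right hy.2 hA.le⟩ (mul_lt_mul_of_pos_left hxy hc)

end IsSerrinTang

end Nonlinearity

/-- A radial ground state of `Δu + F u = 0` in dimension `n + 1`: a strictly decreasing solution of
the radial equation that decays to `0` together with its derivative, hence is positive. The
dimension is shifted to keep the coefficient `n / r` free of subtraction. -/
structure IsRadialGroundState (n : ℕ) (F Q : ℝ → ℝ) : Prop where
  contDiff : ContDiff ℝ 2 Q
  deriv_zero : deriv Q 0 = 0
  ode : ∀ r, 0 < r → deriv (deriv Q) r + n / r * deriv Q r + F (Q r) = 0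
  strictAntiOn : StrictAntiOn Q (Ici 0)
  tendsto_zero : Tendsto Q atTop (𝓝 0)
  tendsto_deriv_zero : Tendsto (deriv Q) atTop (𝓝 0)

/-- The mechanical energy `Q'² / 2 + G(Q)` of a radial profile, dissipated by the friction term
`(n / r) Q'`. -/
def energy (F Q : ℝ → ℝ) (r : ℝ) : ℝ := deriv Q r ^ 2 / 2 + potential F (Q r)

namespace IsRadialGroundState

variable {n : ℕ} {F Q : ℝ → ℝ} {r : ℝ}

section Basic

lemma pos (hQ : IsRadialGroundState n F Q) (hr : 0 ≤ r) : 0 < Q r :=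
  lt_of_strictAntiOn_Ici_of_tendsto hQ.strictAntiOn hQ.tendsto_zero hr

lemma differentiable (hQ : IsRadialGroundState n F Q) : Differentiable ℝ Q :=
  hQ.contDiff.differentiable two_ne_zero

lemma continuous (hQ : IsRadialGroundState n F Q) : Continuous Q := hQ.contDiff.continuous

lemma continuous_deriv (hQ : IsRadialGroundState n F Q) : Continuous (deriv Q) :=
  hQ.contDiff.continuous_deriv one_le_two

lemma hasDerivAt (hQ : IsRadialGroundState n F Q) (r : ℝ) : HasDerivAt Q (deriv Q r) r :=
  (hQ.differentiable r).hasDerivAt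

lemma deriv_deriv (hQ : IsRadialGroundState n F Q) (hr : 0 < r) :
    deriv (deriv Q) r = -(n / r) * deriv Q r - F (Q r) := by
  linear_combination hQ.ode r hr

lemma hasDerivAt_deriv (hQ : IsRadialGroundState n F Q) (hr : 0 < r) :
    HasDerivAt (deriv Q) (-(n / r) * deriv Q r - F (Q r)) r := by
  rw [← hQ.deriv_deriv hr]
  exact (hQ.contDiff.differentiable_deriv_two r).hasDerivAt

lemma hasDerivAt_comp (hQ : IsRadialGroundState n F Q) (hF : Differentiable ℝ F) (r : ℝ) :
    HasDerivAt (fun r => F (Q r)) (deriv F (Q r) * deriv Q r) r :=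
  (hF (Q r)).hasDerivAt.comp r (hQ.hasDerivAt r)

lemma hasDerivAt_potential (hQ : IsRadialGroundState n F Q) (hF : Continuous F) (r : ℝ) :
    HasDerivAt (fun r => potential F (Q r)) (F (Q r) * deriv Q r) r :=
  (_root_.hasDerivAt_potential hF (Q r)).comp r (hQ.hasDerivAt r)

lemma deriv_nonpos (hQ : IsRadialGroundState n F Q) (hr : 0 ≤ r) : deriv Q r ≤ 0 := by
  rw [← (hQ.differentiable r).derivWithin (uniqueDiffOn_Ici 0 r hr)]
  exact hQ.strictAntiOn.antitoneOn.derivWithin_nonpos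

lemma antitoneOn_energy (hQ : IsRadialGroundState n F Q) (hF : Continuous F) :
    AntitoneOn (energy F Q) (Ici 0) := by
  have hderiv : ∀ r, 0 < r → HasDerivAt (energy F Q) (-(n / r * deriv Q r ^ 2)) r := fun r hr => by
    refine ((((hQ.hasDerivAt_deriv hr).pow 2).div_const 2).add
      (hQ.hasDerivAt_potential hF r)).congr_deriv ?_
    ring
  have hcont : Continuous (energy F Q) :=
    ((hQ.continuous_deriv.pow 2).div_const 2).add <|
      continuous_iff_continuousAt.2 fun r => (hQ.hasDerivAt_potential hF r).continuousAt
  refine antitoneOn_of_hasDerivWithinAt_nonpos (f' := fun r => -(n / r * deriv Q r ^ 2))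
    (convex_Ici 0) hcont.continuousOn (fun r hr => ?_) fun r hr => ?_ <;> rw [interior_Ici] at hr
  · exact (hderiv r hr).hasDerivWithinAt
  · have : 0 < r := hr
    exact neg_nonpos.2 (by positivity)

lemma energy_nonneg (hQ : IsRadialGroundState n F Q) (hF : Continuous F) (hr : 0 ≤ r) :
    0 ≤ energy F Q r := by
  have hlim : Tendsto (energy F Q) atTop (𝓝 (0 ^ 2 / 2 + potential F 0)) :=
    ((hQ.tendsto_deriv_zero.pow 2).div_const 2).add
      ((_root_.hasDerivAt_potential hF 0).continuousAt.tendsto.comp hQ.tendsto_zero)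
  rw [potential_zero, zero_pow two_ne_zero, zero_div, zero_add] at hlim
  exact le_of_antitoneOn_Ici_of_tendsto (hQ.antitoneOn_energy hF) hlim hr

end Basic

section Equilibria

lemma neg_deriv_le_of_lipschitz (hQ : IsRadialGroundState n F Q) {L z : ℝ} (hr : 0 ≤ r)
    (hL : 0 ≤ L) (hrz : r ≤ z) (hz : z ≤ r + 1) (hQr : deriv Q r = 0)
    (hLip : ∀ s ∈ Icc r (r + 1), F (Q s) ≤ L * (Q r - Q s)) :
    -deriv Q z ≤ L * (Q r - Q z) := by
  have hw : 0 ≤ L * (Q r - Q z) :=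
    mul_nonneg hL (sub_nonneg.2 (hQ.strictAntiOn.antitoneOn hr (hr.trans hrz) hrz))
  have hderiv : ∀ s ∈ interior (Icc r z), -(L * (Q r - Q z)) ≤ deriv (deriv Q) s := by
    rw [interior_Icc]
    intro s hs
    have hs₀ : 0 < s := hr.trans_lt hs.1
    have hfriction : n / s * deriv Q s ≤ 0 :=
      mul_nonpos_of_nonneg_of_nonpos (by positivity) (hQ.deriv_nonpos hs₀.le)
    have hforce : F (Q s) ≤ L * (Q r - Q z) := by
      refine (hLip s ⟨hs.1.le, hs.2.le.trans hz⟩).trans ?_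
      gcongr
      exact hQ.strictAntiOn.antitoneOn hs₀.le (hr.trans hrz) hs.2.le
    rw [hQ.deriv_deriv hs₀]
    linarith
  have hgrowth : -(L * (Q r - Q z)) * (z - r) ≤ deriv Q z - deriv Q r :=
    (convex_Icc r z).mul_sub_le_image_sub_of_le_deriv hQ.continuous_deriv.continuousOn
      hQ.contDiff.differentiable_deriv_two.differentiableOn hderiv r (left_mem_Icc.2 hrz) z
      (right_mem_Icc.2 hrz) hrz
  have hlength : L * (Q r - Q z) * (z - r) ≤ L * (Q r - Q z) :=
    mul_le_of_le_one_right hw (by linarith)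
  linarith

-- Uniqueness for the initial value problem, which also holds at the singular point `r = 0`.
lemma map_ne_zero_of_deriv_eq_zero (hQ : IsRadialGroundState n F Q) (hF : ContDiff ℝ 1 F)
    (hr : 0 ≤ r) (hQr : deriv Q r = 0) : F (Q r) ≠ 0 := by
  intro hFr
  have hanti : ∀ s ∈ Icc r (r + 1), Q (r + 1) ≤ Q s ∧ Q s ≤ Q r := fun s hs =>
    have hs₀ : 0 ≤ s := hr.trans hs.1
    ⟨hQ.strictAntiOn.antitoneOn hs₀ (hs₀.trans hs.2) hs.2, hQ.strictAntiOn.antitoneOn hr hs₀ hs.1⟩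
  obtain ⟨L, hL⟩ := hF.contDiffOn.exists_lipschitzOnWith one_ne_zero
    (convex_Icc (Q (r + 1)) (Q r)) isCompact_Icc
  have hLip : ∀ s ∈ Icc r (r + 1), F (Q s) ≤ L * (Q r - Q s) := fun s hs => by
    have h := hL.dist_le_mul (Q s) (hanti s hs) (Q r) ⟨(hanti s hs).1.trans (hanti s hs).2, le_rfl⟩
    rw [Real.dist_eq, Real.dist_eq, hFr, sub_zero, abs_sub_comm,
      abs_of_nonneg (sub_nonneg.2 (hanti s hs).2)] at h
    exact (le_abs_self _).trans h
  have hgronwall : ∀ z ∈ Icc r (r + 1), Q r - Q z = 0 := by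
    refine eq_zero_of_abs_deriv_le_mul_abs_self_of_eq_zero_right (K := L)
      (continuous_const.sub hQ.continuous).continuousOn
      (fun z _ => ((hQ.hasDerivAt z).const_sub (Q r)).hasDerivWithinAt) (sub_self _) fun z hz => ?_
    rw [norm_neg, norm_of_nonpos (hQ.deriv_nonpos (hr.trans hz.1)),
      norm_of_nonneg (sub_nonneg.2 (hanti z (Ico_subset_Icc_self hz)).2)]
    exact hQ.neg_deriv_le_of_lipschitz hr L.coe_nonneg hz.1 hz.2.le hQr hLip
  have hlt : Q (r + 1) < Q r := hQ.strictAntiOn hr (hr.trans (by linarith)) (lt_add_one r)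
  linarith [hgronwall (r + 1) (right_mem_Icc.2 (by linarith))]

lemma apply_zero_lt_of_forall_potential_le (hQ : IsRadialGroundState n F Q)
    (hF : ContDiff ℝ 1 F) {m : ℝ} (hm : 0 < m) (hFm : F m = 0)
    (hmax : ∀ x, potential F x ≤ potential F m) : Q 0 < m := by
  by_contra! hmQ
  obtain ⟨R, hR, hQR⟩ :=
    ((eventually_ge_atTop 0).and (hQ.tendsto_zero.eventually_lt_const hm)).exists
  obtain ⟨r, hr, rfl⟩ := intermediate_value_Icc' hR hQ.continuous.continuousOn ⟨hQR.le, hmQ⟩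
  refine hQ.map_ne_zero_of_deriv_eq_zero hF hr.1 ?_ hFm
  have henergy : energy F Q r ≤ energy F Q 0 :=
    hQ.antitoneOn_energy hF.continuous self_mem_Ici hr.1 hr.1
  simp only [energy, hQ.deriv_zero] at henergy
  have hsq : deriv Q r ^ 2 ≤ 0 := by linarith [hmax (Q 0)]
  exact pow_eq_zero_iff two_ne_zero |>.1 (hsq.antisymm (sq_nonneg _))

end Equilibria

end IsRadialGroundState

lemma IsMassive.exists_le_neg_mul {F : ℝ → ℝ} (hF : IsMassive F) :
    ∃ κ > 0, ∀ᶠ x in 𝓝[>] 0, deriv F x ≤ -κ ∧ F x ≤ -κ * x := by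
  obtain ⟨κ, hκ, hκF⟩ : ∃ κ > 0, deriv F 0 < -κ :=
    ⟨-deriv F 0 / 2, by linarith [hF.deriv_zero_neg], by linarith [hF.deriv_zero_neg]⟩
  refine ⟨κ, hκ, ?_⟩
  have hderiv : ∀ᶠ x in 𝓝[>] 0, deriv F x < -κ :=
    (hF.contDiff.continuous_deriv_one.continuousAt.eventually_lt_const hκF).filter_mono
      nhdsWithin_le_nhds
  have hslope : ∀ᶠ x in 𝓝[>] 0, slope F 0 x < -κ :=
    ((hasDerivAt_iff_tendsto_slope.1 (hF.differentiable 0).hasDerivAt).mono_left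
      (nhdsGT_le_nhdsNE 0)).eventually_lt_const hκF
  filter_upwards [hderiv, hslope, self_mem_nhdsWithin] with x hFx hslopex hx
  rw [slope_def_field, hF.map_zero, sub_zero, sub_zero, div_lt_iff₀ hx] at hslopex
  exact ⟨hFx.le, hslopex.le⟩

namespace IsRadialGroundState

variable {n : ℕ} {F Q : ℝ → ℝ} {r : ℝ}

section Decay

lemma tendsto_nhdsGT_zero (hQ : IsRadialGroundState n F Q) : Tendsto Q atTop (𝓝[>] 0) :=
  tendsto_nhdsWithin_iff.2
    ⟨hQ.tendsto_zero, (eventually_ge_atTop 0).mono fun _ hr => hQ.pos hr⟩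

lemma eventually_mul_le_neg_deriv (hQ : IsRadialGroundState n F Q) (hF : IsMassive F) :
    ∃ ε > 0, ∀ᶠ r in atTop, ε * Q r ≤ -deriv Q r := by
  obtain ⟨κ, hκ, hmass⟩ := hF.exists_le_neg_mul
  obtain ⟨R, hR⟩ := eventually_atTop.1 (hQ.tendsto_nhdsGT_zero.eventually hmass)
  have hderiv : ∀ r, 0 < r → HasDerivAt (fun r => deriv Q r ^ 2 - κ * Q r ^ 2)
      (2 * (-deriv Q r * (F (Q r) - -κ * Q r)) - 2 * (n / r * deriv Q r ^ 2)) r := fun r hr => by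
    refine (((hQ.hasDerivAt_deriv hr).pow 2).sub
      (((hQ.hasDerivAt r).pow 2).const_mul κ)).congr_deriv ?_
    ring
  have hanti : AntitoneOn (fun r => deriv Q r ^ 2 - κ * Q r ^ 2) (Ici (max R 1)) := by
    have hpos : ∀ r ∈ Ici (max R 1), 0 < r := fun r hr =>
      zero_lt_one.trans_le ((le_max_right _ _).trans hr)
    refine antitoneOn_of_hasDerivWithinAt_nonpos (convex_Ici _)
      (fun r hr => (hderiv r (hpos r hr)).continuousAt.continuousWithinAt)
      (fun r hr => (hderiv r (hpos r (interior_subset hr))).hasDerivWithinAt) fun r hr => ?_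
    have hr₀ : 0 < r := hpos r (interior_subset hr)
    have hforce : -deriv Q r * (F (Q r) - -κ * Q r) ≤ 0 :=
      mul_nonpos_of_nonneg_of_nonpos (neg_nonneg.2 (hQ.deriv_nonpos hr₀.le))
        (sub_nonpos.2 (hR r ((le_max_left _ _).trans (interior_subset hr))).2)
    have hfriction : 0 ≤ n / r * deriv Q r ^ 2 := by positivity
    linarith
  have hlim : Tendsto (fun r => deriv Q r ^ 2 - κ * Q r ^ 2) atTop (𝓝 0) := by
    simpa using (hQ.tendsto_deriv_zero.pow 2).sub ((hQ.tendsto_zero.pow 2).const_mul κ)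
  refine ⟨√κ, sqrt_pos.2 hκ, ?_⟩
  filter_upwards [eventually_ge_atTop (max R 1), eventually_ge_atTop 0] with r hr hr₀
  rw [← sq_le_sq₀ (mul_nonneg (sqrt_nonneg κ) (hQ.pos hr₀).le)
    (neg_nonneg.2 (hQ.deriv_nonpos hr₀)), mul_pow, sq_sqrt hκ.le, neg_sq]
  have hnonneg := le_of_antitoneOn_Ici_of_tendsto hanti hlim hr
  exact sub_nonneg.1 hnonneg

-- `Q'` is eventually increasing, so `-Q' r` is at most the decrease of `Q` over `[r - 1, r]`.
lemma eventually_neg_deriv_le (hQ : IsRadialGroundState n F Q) (hF : IsMassive F) :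
    ∀ᶠ r in atTop, -deriv Q r ≤ Q (r - 1) := by
  obtain ⟨κ, hκ, hmass⟩ := hF.exists_le_neg_mul
  obtain ⟨R, hR⟩ := eventually_atTop.1 (hQ.tendsto_nhdsGT_zero.eventually hmass)
  have hmono : MonotoneOn (deriv Q) (Ici (max R 1)) := by
    refine monotoneOn_of_deriv_nonneg (convex_Ici _) hQ.continuous_deriv.continuousOn
      hQ.contDiff.differentiable_deriv_two.differentiableOn fun r hr => ?_
    have hr : max R 1 ≤ r := interior_subset hr
    have hr₀ : 0 < r := zero_lt_one.trans_le ((le_max_right _ _).trans hr)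
    have hfriction : n / r * deriv Q r ≤ 0 :=
      mul_nonpos_of_nonneg_of_nonpos (by positivity) (hQ.deriv_nonpos hr₀.le)
    have hforce : 0 ≤ κ * Q r := mul_nonneg hκ.le (hQ.pos hr₀.le).le
    rw [hQ.deriv_deriv hr₀]
    linarith [(hR r ((le_max_left _ _).trans hr)).2]
  filter_upwards [eventually_ge_atTop (max R 1 + 1)] with r hr
  have hr₁ : r - 1 ∈ Ici (max R 1) := le_sub_iff_add_le.2 hr
  have hle : r - 1 ≤ r := sub_le_self r zero_le_one
  have hdecrease : Q r - Q (r - 1) ≤ deriv Q r * (r - (r - 1)) := by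
    refine (convex_Icc (r - 1) r).image_sub_le_mul_sub_of_deriv_le hQ.continuous.continuousOn
      hQ.differentiable.differentiableOn (fun s hs => ?_) _ (left_mem_Icc.2 hle) _
      (right_mem_Icc.2 hle) hle
    have hs := interior_subset hs
    exact hmono (hr₁.trans hs.1) (hr₁.trans hle) hs.2
  have hQr : 0 < Q r := hQ.pos (zero_le_one.trans (by linarith [le_max_right R 1]))
  linarith

lemma exists_isBigO_exp_neg (hQ : IsRadialGroundState n F Q) (hF : IsMassive F) :
    ∃ ε > 0, (Q =O[atTop] fun r => exp (-ε * r)) ∧ deriv Q =O[atTop] fun r => exp (-ε * r) := by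
  obtain ⟨ε, hε, hdecay⟩ := hQ.eventually_mul_le_neg_deriv hF
  obtain ⟨R, hR⟩ := eventually_atTop.1 hdecay
  have hQexp : Q =O[atTop] fun r => exp (-ε * r) := by
    refine IsBigO.of_bound (Q R * exp (ε * R)) ?_
    filter_upwards [eventually_ge_atTop R, eventually_ge_atTop 0] with r hr hr₀
    rw [norm_of_nonneg (hQ.pos hr₀).le, norm_of_nonneg (exp_pos _).le]
    have h := mul_exp_le_of_mul_le_deriv (ε := -ε) (fun s _ => (hQ.hasDerivAt s).neg)
      (fun s hs => by simpa only [Pi.neg_apply, neg_mul_neg] using hR s hs) hr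
    simpa only [Pi.neg_apply, neg_mul, neg_neg, neg_le_neg_iff] using h
  refine ⟨ε, hε, hQexp, ?_⟩
  calc deriv Q =O[atTop] fun r => Q (r - 1) := by
        refine IsBigO.of_bound 1 ?_
        filter_upwards [hQ.eventually_neg_deriv_le hF, eventually_ge_atTop 1] with r hr hr₁
        rw [norm_of_nonpos (hQ.deriv_nonpos (zero_le_one.trans hr₁)),
          norm_of_nonneg (hQ.pos (sub_nonneg.2 hr₁)).le, one_mul]
        exact hr
    _ =O[atTop] fun r => exp (-ε * (r - 1)) :=
        hQexp.comp_tendsto (tendsto_atTop_add_const_right _ (-1) tendsto_id)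
    _ =O[atTop] fun r => exp (-ε * r) := by
        refine (isBigO_const_mul_self (exp ε) (fun r => exp (-ε * r)) atTop).congr_left fun r => ?_
        rw [← exp_add]
        ring_nf

lemma tendsto_pow_mul_deriv (hQ : IsRadialGroundState n F Q) (hF : IsMassive F) (k : ℕ) :
    Tendsto (fun r => r ^ k * deriv Q r) atTop (𝓝 0) := by
  obtain ⟨ε, hε, -, hexp⟩ := hQ.exists_isBigO_exp_neg hF
  exact tendsto_pow_mul_of_isBigO_exp_neg hε hexp k

lemma tendsto_pow_mul_comp (hQ : IsRadialGroundState n F Q) (hF : IsMassive F) {f : ℝ → ℝ} {f' : ℝ}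
    (hf : HasDerivAt f f' 0) (hf₀ : f 0 = 0) (k : ℕ) :
    Tendsto (fun r => r ^ k * f (Q r)) atTop (𝓝 0) := by
  obtain ⟨ε, hε, hexp, -⟩ := hQ.exists_isBigO_exp_neg hF
  have hfQ : (fun r => f (Q r)) =O[atTop] Q := by
    simpa only [hf₀, sub_zero, Function.comp_def] using hf.isBigO_sub.comp_tendsto hQ.tendsto_zero
  exact tendsto_pow_mul_of_isBigO_exp_neg hε (hfQ.trans hexp) k

lemma tendsto_pow_mul (hQ : IsRadialGroundState n F Q) (hF : IsMassive F) (k : ℕ) :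
    Tendsto (fun r => r ^ k * Q r) atTop (𝓝 0) :=
  hQ.tendsto_pow_mul_comp hF (hasDerivAt_id 0) rfl k

lemma tendsto_pow_mul_nonlinearity (hQ : IsRadialGroundState n F Q) (hF : IsMassive F) (k : ℕ) :
    Tendsto (fun r => r ^ k * F (Q r)) atTop (𝓝 0) :=
  hQ.tendsto_pow_mul_comp hF (hF.differentiable 0).hasDerivAt hF.map_zero k

lemma tendsto_pow_mul_potential (hQ : IsRadialGroundState n F Q) (hF : IsMassive F) (k : ℕ) :
    Tendsto (fun r => r ^ k * potential F (Q r)) atTop (𝓝 0) :=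
  hQ.tendsto_pow_mul_comp hF (_root_.hasDerivAt_potential hF.continuous 0) (potential_zero F) k

end Decay

end IsRadialGroundState

/-- The Pohozaev functional of a radial profile, obtained by testing the equation with
`r Q' + (n - 1) / 2 * Q`. -/
def pohozaev (n : ℕ) (F Q : ℝ → ℝ) (r : ℝ) : ℝ :=
  r ^ (n + 1) * (deriv Q r ^ 2 + 2 * potential F (Q r)) + (n - 1) * (r ^ n * (Q r * deriv Q r))

/-- The Wronskian `rⁿ ((r Q') Q' - (r Q')' Q)` of the dilation mode `r Q'` and the profile `Q`,
with `Q''` eliminated by the radial equation. -/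
def dilationWronskian (n : ℕ) (F Q : ℝ → ℝ) (r : ℝ) : ℝ :=
  r ^ n * ((n - 1) * (Q r * deriv Q r) + r * (F (Q r) * Q r) + r * deriv Q r ^ 2)

namespace IsRadialGroundState

variable {n : ℕ} {F Q : ℝ → ℝ} {M r : ℝ}

section Dilation

lemma mem_Ioo (hQ : IsRadialGroundState n F Q) (hQM : Q 0 < M) (hr : 0 ≤ r) : Q r ∈ Ioo 0 M :=
  ⟨hQ.pos hr, (hQ.strictAntiOn.antitoneOn self_mem_Ici hr hr).trans_lt hQM⟩

lemma nonlinearity_pos_of_deriv_eq_zero (hQ : IsRadialGroundState n F Q) (hF : Differentiable ℝ F)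
    (hST : IsSerrinTang F M) (hQM : Q 0 < M) (hr : 0 ≤ r) (hQr : deriv Q r = 0) : 0 < F (Q r) := by
  refine hST.pos_of_potential_nonneg hF (hQ.mem_Ioo hQM hr) ?_
  simpa only [energy, hQr, zero_pow two_ne_zero, zero_div, zero_add] using
    hQ.energy_nonneg hF.continuous hr

lemma deriv_neg (hQ : IsRadialGroundState n F Q) (hF : Differentiable ℝ F)
    (hST : IsSerrinTang F M) (hQM : Q 0 < M) (hr : 0 < r) : deriv Q r < 0 := by
  refine (hQ.deriv_nonpos hr.le).lt_of_ne fun hQr => ?_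
  have hconcave : deriv (deriv Q) r < 0 := by
    rw [hQ.deriv_deriv hr, hQr, mul_zero, zero_sub, neg_lt_zero]
    exact hQ.nonlinearity_pos_of_deriv_eq_zero hF hST hQM hr.le hQr
  obtain ⟨s, hs, hsr⟩ := ((eventually_pos_nhdsLT_of_deriv_neg hconcave hQr).and
    (Ioo_mem_nhdsLT hr)).exists
  exact hs.not_ge (hQ.deriv_nonpos hsr.1.le)

lemma hasDerivAt_pohozaev (hQ : IsRadialGroundState n F Q) (hF : Continuous F) (hr : 0 < r) :
    HasDerivAt (pohozaev n F Q)
      (r ^ n * (2 * (n + 1) * potential F (Q r) - (n - 1) * (Q r * F (Q r)))) r := by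
  have hr₀ : r ≠ 0 := hr.ne'
  refine (((hasDerivAt_pow_of_ne_zero (n + 1) hr₀).mul (((hQ.hasDerivAt_deriv hr).pow 2).add
    ((hQ.hasDerivAt_potential hF r).const_mul 2))).add (((hasDerivAt_pow_of_ne_zero n hr₀).mul
    ((hQ.hasDerivAt r).mul (hQ.hasDerivAt_deriv hr))).const_mul ((n : ℝ) - 1))).congr_deriv ?_
  simp only [Pi.add_apply, Pi.mul_apply, Pi.pow_apply, Nat.cast_add_one]
  field_simp
  ring

lemma tendsto_pohozaev (hQ : IsRadialGroundState n F Q) (hF : IsMassive F) :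
    Tendsto (pohozaev n F Q) atTop (𝓝 0) := by
  have hkinetic := (hQ.tendsto_pow_mul_deriv hF (n + 1)).mul hQ.tendsto_deriv_zero
  have hpotential := (hQ.tendsto_pow_mul_potential hF (n + 1)).const_mul 2
  have hmixed := ((hQ.tendsto_pow_mul hF n).mul hQ.tendsto_deriv_zero).const_mul ((n : ℝ) - 1)
  rw [show (0 : ℝ) = 0 * 0 + 2 * 0 + (n - 1) * (0 * 0) by ring]
  refine ((hkinetic.add hpotential).add hmixed).congr fun r => ?_
  rw [pohozaev]
  ring

lemma pohozaev_pos (hQ : IsRadialGroundState n F Q) (hF : IsMassive F) (hST : IsSerrinTang F M)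
    (hQM : Q 0 < M) (hn : 1 ≤ n) (hr : 0 < r) : 0 < pohozaev n F Q r := by
  have hn₁ : (0 : ℝ) ≤ n - 1 := sub_nonneg.2 (Nat.one_le_cast.2 hn)
  have hcont : Continuous (pohozaev n F Q) := by
    have hG : Continuous fun r => potential F (Q r) :=
      continuous_iff_continuousAt.2 fun r => (hQ.hasDerivAt_potential hF.continuous r).continuousAt
    have := hQ.continuous
    have := hQ.continuous_deriv
    unfold pohozaev
    fun_prop
  have hzero : pohozaev n F Q 0 = 0 := by
    rw [pohozaev, zero_pow n.succ_ne_zero, hQ.deriv_zero]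
    ring
  refine pos_of_tendsto_zero_of_deriv_sign hcont hzero (hQ.tendsto_pohozaev hF)
    (fun r hr => hQ.hasDerivAt_pohozaev hF.continuous hr) (fun s r hs hsr h => ?_) hr
  have hr : 0 < r := hs.trans hsr
  have hle := sub_nonneg.1 (nonneg_of_mul_nonneg_right h (pow_pos hr n))
  have hlt := hST.lt_potential hF.differentiable (μ := n + 3) hn₁ (by linarith) (by positivity)
    (hQ.pos hr.le) (hQ.strictAntiOn hs.le hr.le hsr) (hQ.mem_Ioo hQM hs.le).2 (by linarith)
  exact mul_pos (pow_pos hs n) (by linarith)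

lemma hasDerivAt_dilationWronskian (hQ : IsRadialGroundState n F Q) (hF : Differentiable ℝ F)
    (hr : 0 < r) : HasDerivAt (dilationWronskian n F Q) (r ^ n * (2 * (F (Q r) * Q r) +
      r * (deriv Q r * (Q r * deriv F (Q r) - F (Q r))))) r := by
  refine ((hasDerivAt_pow_of_ne_zero n hr.ne').mul (((((hQ.hasDerivAt r).mul
    (hQ.hasDerivAt_deriv hr)).const_mul ((n : ℝ) - 1)).add ((hasDerivAt_id r).mul
    ((hQ.hasDerivAt_comp hF r).mul (hQ.hasDerivAt r)))).add ((hasDerivAt_id r).mul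
    ((hQ.hasDerivAt_deriv hr).pow 2)))).congr_deriv ?_
  simp only [Pi.add_apply, Pi.mul_apply, Pi.pow_apply, id]
  field_simp
  ring

lemma mul_nonlinearity_lt_of_dilationWronskian_nonpos (hQ : IsRadialGroundState n F Q)
    (hF : IsMassive F) (hST : IsSerrinTang F M) (hQM : Q 0 < M) (hn : 1 ≤ n) (hr : 0 < r)
    (hW : dilationWronskian n F Q r ≤ 0) : Q r * F (Q r) < 2 * potential F (Q r) := by
  have hP := hQ.pohozaev_pos hF hST hQM hn hr
  rw [pohozaev, show r ^ (n + 1) * (deriv Q r ^ 2 + 2 * potential F (Q r)) +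
    (n - 1) * (r ^ n * (Q r * deriv Q r)) = r ^ n * (r * deriv Q r ^ 2 +
    r * (2 * potential F (Q r)) + (n - 1) * (Q r * deriv Q r)) by ring] at hP
  have hP := pos_of_mul_pos_right hP (pow_pos hr n).le
  have hW := nonpos_of_mul_nonpos_right hW (pow_pos hr n)
  refine lt_of_mul_lt_mul_left ?_ hr.le
  linarith

lemma dilationWronskian_pos (hQ : IsRadialGroundState n F Q) (hF : IsMassive F)
    (hST : IsSerrinTang F M) (hQM : Q 0 < M) (hn : 1 ≤ n) (hr : 0 < r) :
    0 < dilationWronskian n F Q r := by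
  by_contra! hW
  have hQr := hQ.mul_nonlinearity_lt_of_dilationWronskian_nonpos hF hST hQM hn hr hW
  have hsublinear : ∀ s, 0 < s → s < r → Q s * deriv F (Q s) < F (Q s) := fun s hs hsr => by
    have hlt := hST.lt_potential hF.differentiable zero_le_one le_rfl zero_lt_one (hQ.pos hr.le)
      (hQ.strictAntiOn hs.le hr.le hsr) (hQ.mem_Ioo hQM hs.le).2 (by linarith)
    simpa only [one_mul] using hST.mul_deriv_lt_of_le_potential hF.differentiable zero_le_one le_rfl
      zero_lt_one (hQ.mem_Ioo hQM hs.le) hlt.le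
  have hcont : Continuous (dilationWronskian n F Q) := by
    have := hQ.continuous
    have := hQ.continuous_deriv
    have := hF.continuous
    unfold dilationWronskian
    fun_prop
  have hmono : StrictMonoOn (dilationWronskian n F Q) (Icc 0 r) := by
    refine strictMonoOn_of_hasDerivWithinAt_pos (f' := fun s => s ^ n * (2 * (F (Q s) * Q s) +
      s * (deriv Q s * (Q s * deriv F (Q s) - F (Q s))))) (convex_Icc 0 r) hcont.continuousOn
      (fun s hs => ?_) fun s hs => ?_ <;> rw [interior_Icc] at hs
    · exact (hQ.hasDerivAt_dilationWronskian hF.differentiable hs.1).hasDerivWithinAt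
    have hs₀ : 0 < s := hs.1
    have hlt := hsublinear s hs.1 hs.2
    have hFQ : 0 < F (Q s) * Q s :=
      mul_pos (hST.pos_of_mul_deriv_le (hQ.mem_Ioo hQM hs₀.le) hlt.le) (hQ.pos hs₀.le)
    have hprod : 0 < deriv Q s * (Q s * deriv F (Q s) - F (Q s)) :=
      mul_pos_of_neg_of_neg (hQ.deriv_neg hF.differentiable hST hQM hs₀) (sub_neg.2 hlt)
    positivity
  have hlt := hmono (left_mem_Icc.2 hr.le) (right_mem_Icc.2 hr.le) hr
  rw [dilationWronskian, zero_pow (Nat.one_le_iff_ne_zero.1 hn), zero_mul] at hlt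
  exact hlt.not_ge hW

lemma strictAntiOn_mul_deriv_div (hQ : IsRadialGroundState n F Q) (hF : IsMassive F)
    (hST : IsSerrinTang F M) (hQM : Q 0 < M) (hn : 1 ≤ n) :
    StrictAntiOn (fun r => r * deriv Q r / Q r) (Ioi 0) := by
  have hderiv : ∀ r, 0 < r → HasDerivAt (fun r => r * deriv Q r / Q r)
      (-(dilationWronskian n F Q r / (r ^ n * Q r ^ 2))) r := fun r hr => by
    have hQr : Q r ≠ 0 := (hQ.pos hr.le).ne'
    refine (((hasDerivAt_id r).mul (hQ.hasDerivAt_deriv hr)).div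
      (hQ.hasDerivAt r) hQr).congr_deriv ?_
    simp only [dilationWronskian, Pi.mul_apply, id]
    field_simp
    ring
  refine strictAntiOn_of_hasDerivWithinAt_neg (convex_Ioi 0)
    (fun r hr => (hderiv r hr).continuousAt.continuousWithinAt)
    (fun r hr => (hderiv r (interior_subset hr)).hasDerivWithinAt) fun r hr => neg_lt_zero.2 ?_
  have hr₀ : 0 < r := interior_subset hr
  have := hQ.pos hr₀.le
  have := hQ.dilationWronskian_pos hF hST hQM hn hr₀
  positivity

end Dilation

end IsRadialGroundState

/-- A twice continuously differentiable solution of the linear radial equation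
`v'' + (n / r) v' + q v = 0` on `(0, ∞)`. -/
structure IsRadialLinearSol (n : ℕ) (q v : ℝ → ℝ) : Prop where
  contDiff : ContDiff ℝ 2 v
  ode : ∀ r, 0 < r → deriv (deriv v) r + n / r * deriv v r + q r * v r = 0

lemma isBigO_one_of_mul_deriv_nonpos {f f' : ℝ → ℝ} {R : ℝ}
    (hf : ∀ r, R ≤ r → HasDerivAt f (f' r) r) (hff' : ∀ r, R ≤ r → f r * f' r ≤ 0) :
    f =O[atTop] fun _ => (1 : ℝ) := by
  have hanti : AntitoneOn (fun r => f r ^ 2) (Ici R) := by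
    refine antitoneOn_of_hasDerivWithinAt_nonpos (f' := fun r => 2 * (f r * f' r)) (convex_Ici R)
      (fun r hr => ((hf r hr).continuousAt.pow 2).continuousWithinAt) (fun r hr => ?_)
      fun r hr => by linarith [hff' r (interior_subset hr)]
    refine (((hf r (interior_subset hr)).pow 2).congr_deriv ?_).hasDerivWithinAt
    ring
  refine IsBigO.of_bound |f R| ?_
  filter_upwards [eventually_ge_atTop R] with r hr
  rw [norm_one, mul_one]
  exact sq_le_sq.1 (hanti self_mem_Ici hr hr)

namespace IsRadialLinearSol

variable {n : ℕ} {q v : ℝ → ℝ} {r : ℝ}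

lemma continuous (hv : IsRadialLinearSol n q v) : Continuous v := hv.contDiff.continuous

lemma continuous_deriv (hv : IsRadialLinearSol n q v) : Continuous (deriv v) :=
  hv.contDiff.continuous_deriv one_le_two

lemma hasDerivAt (hv : IsRadialLinearSol n q v) (r : ℝ) : HasDerivAt v (deriv v r) r :=
  (hv.contDiff.differentiable two_ne_zero r).hasDerivAt

lemma hasDerivAt_deriv (hv : IsRadialLinearSol n q v) (hr : 0 < r) :
    HasDerivAt (deriv v) (-(n / r) * deriv v r + -q r * v r) r := by
  refine (hv.contDiff.differentiable_deriv_two r).hasDerivAt.congr_deriv ?_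
  linear_combination hv.ode r hr

lemma neg (hv : IsRadialLinearSol n q v) : IsRadialLinearSol n q fun r => -v r where
  contDiff := hv.contDiff.neg
  ode r hr := by
    simp only [deriv.fun_neg', deriv.fun_neg]
    linear_combination -hv.ode r hr

lemma growsExponentially (hv : IsRadialLinearSol n q v) {κ R : ℝ} (hR : 0 < R) (hκ : 0 < κ)
    (hq : ∀ r, R ≤ r → q r ≤ -κ) (hRr : R ≤ r) (hvr : 0 < v r) (hvr' : 0 < deriv v r) :
    GrowsExponentially fun r => min (v r) (deriv v r) := by
  have hr : 0 < r := hR.trans_le hRr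
  exact growsExponentially_of_radial_growth hr hκ (fun s hs => le_neg.2 (hq s (hRr.trans hs)))
    (fun s _ => hv.hasDerivAt s) (fun s hs => hv.hasDerivAt_deriv (hr.trans_le hs)) hvr hvr'

lemma isBigO_one_of_mul_deriv_nonpos (hv : IsRadialLinearSol n q v) {R : ℝ} (hR : 0 < R)
    (hq : ∀ r, R ≤ r → q r ≤ 0) (hvv' : ∀ r, R ≤ r → v r * deriv v r ≤ 0) :
    (v =O[atTop] fun _ => (1 : ℝ)) ∧ deriv v =O[atTop] fun _ => (1 : ℝ) := by
  refine ⟨_root_.isBigO_one_of_mul_deriv_nonpos (fun r _ => hv.hasDerivAt r) hvv',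
    _root_.isBigO_one_of_mul_deriv_nonpos
      (fun r hr => hv.hasDerivAt_deriv (hR.trans_le hr)) fun r hr => ?_⟩
  have hr₀ : 0 < r := hR.trans_le hr
  have hfriction : 0 ≤ n / r * deriv v r ^ 2 := by positivity
  have hforce : 0 ≤ q r * (v r * deriv v r) := mul_nonneg_of_nonpos_of_nonpos (hq r hr) (hvv' r hr)
  linarith

lemma growsExponentially_or_isBigO_one (hv : IsRadialLinearSol n q v) {κ : ℝ} (hκ : 0 < κ)
    (hq : ∀ᶠ r in atTop, q r ≤ -κ) :
    (GrowsExponentially fun r => min (v r) (deriv v r)) ∨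
      (GrowsExponentially fun r => min (-v r) (-deriv v r)) ∨
      (v =O[atTop] fun _ => (1 : ℝ)) ∧ deriv v =O[atTop] fun _ => (1 : ℝ) := by
  obtain ⟨R, hR⟩ := eventually_atTop.1 (hq.and (eventually_gt_atTop 0))
  have hR₀ : 0 < R := (hR R le_rfl).2
  by_cases! h : ∃ r, R ≤ r ∧ 0 < v r * deriv v r
  · obtain ⟨r, hr, hvr⟩ := h
    rcases pos_and_pos_or_neg_and_neg_of_mul_pos hvr with ⟨hvr, hvr'⟩ | ⟨hvr, hvr'⟩
    · exact Or.inl (hv.growsExponentially hR₀ hκ (fun s hs => (hR s hs).1) hr hvr hvr')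
    · refine Or.inr (Or.inl ?_)
      have hgrowth := hv.neg.growsExponentially hR₀ hκ (fun s hs => (hR s hs).1) hr (neg_pos.2 hvr)
        (by rwa [deriv.fun_neg, neg_pos])
      simpa only [deriv.fun_neg] using hgrowth
  · exact Or.inr (Or.inr (hv.isBigO_one_of_mul_deriv_nonpos hR₀
      (fun r hr => (hR r hr).1.trans (neg_nonpos.2 hκ.le)) h))

end IsRadialLinearSol

/-- The Wronskian `rⁿ (Q' v' - Q'' v)` of the translation mode `Q'` with `v`, with `Q''` eliminated
by the radial equation. -/
def translationWronskian (n : ℕ) (F Q v : ℝ → ℝ) (r : ℝ) : ℝ :=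
  n * r ^ (n - 1) * (deriv Q r * v r) + r ^ n * (F (Q r) * v r + deriv Q r * deriv v r)

lemma translationWronskian_eq {n : ℕ} {F Q v : ℝ → ℝ} {r : ℝ} (hr : 0 < r) :
    translationWronskian n F Q v r =
      r ^ n * (n / r * (deriv Q r * v r) + F (Q r) * v r + deriv Q r * deriv v r) := by
  rcases n with _ | n
  · simp [translationWronskian]
  · rw [translationWronskian, Nat.add_sub_cancel]
    field_simp
    ring

namespace IsRadialGroundState

variable {n : ℕ} {F Q v : ℝ → ℝ} {M r : ℝ}

section Translation

lemma eventually_deriv_nonlinearity_le (hQ : IsRadialGroundState n F Q) (hF : IsMassive F) :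
    ∃ κ > 0, ∀ᶠ r in atTop, deriv F (Q r) ≤ -κ := by
  obtain ⟨κ, hκ, hmass⟩ := hF.exists_le_neg_mul
  exact ⟨κ, hκ, (hQ.tendsto_nhdsGT_zero.eventually hmass).mono fun r hr => hr.1⟩

lemma hasDerivAt_translationWronskian (hQ : IsRadialGroundState n F Q) (hF : Differentiable ℝ F)
    (hv : IsRadialLinearSol n (fun r => deriv F (Q r)) v) (hr : 0 < r) :
    HasDerivAt (translationWronskian n F Q v) (-(n * r ^ n / r ^ 2 * (deriv Q r * v r))) r := by
  have hQv := (hQ.hasDerivAt_deriv hr).mul (hv.hasDerivAt r)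
  have hweighted := (hasDerivAt_pow_of_ne_zero n hr.ne').mul
    (((((hasDerivAt_inv hr.ne').const_mul (n : ℝ)).mul hQv).add
      ((hQ.hasDerivAt_comp hF r).mul (hv.hasDerivAt r))).add
      ((hQ.hasDerivAt_deriv hr).mul (hv.hasDerivAt_deriv hr)))
  refine (hweighted.congr_of_eventuallyEq ?_).congr_deriv ?_
  · filter_upwards [eventually_gt_nhds hr] with s hs
    rw [translationWronskian_eq hs]
    simp only [Pi.add_apply, Pi.mul_apply, div_eq_mul_inv]
  · simp only [Pi.add_apply, Pi.mul_apply]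
    field_simp
    ring

lemma continuous_translationWronskian (hQ : IsRadialGroundState n F Q) (hF : Continuous F)
    (hv : IsRadialLinearSol n (fun r => deriv F (Q r)) v) :
    Continuous (translationWronskian n F Q v) := by
  have := hQ.continuous
  have := hQ.continuous_deriv
  have := hv.continuous
  have := hv.continuous_deriv
  unfold translationWronskian
  fun_prop

lemma translationWronskian_zero (hQ : IsRadialGroundState n F Q) (hn : 1 ≤ n) :
    translationWronskian n F Q v 0 = 0 := by
  rw [translationWronskian, hQ.deriv_zero, zero_pow (Nat.one_le_iff_ne_zero.1 hn)]
  ring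

lemma tendsto_translationWronskian (hQ : IsRadialGroundState n F Q) (hF : IsMassive F)
    (hv : v =O[atTop] fun _ => (1 : ℝ)) (hv' : deriv v =O[atTop] fun _ => (1 : ℝ)) :
    Tendsto (translationWronskian n F Q v) atTop (𝓝 0) := by
  have hv := (isBigO_one_iff ℝ).1 hv
  have hv' := (isBigO_one_iff ℝ).1 hv'
  have hfriction :=
    ((hQ.tendsto_pow_mul_deriv hF (n - 1)).zero_mul_isBoundedUnder_le hv).const_mul (n : ℝ)
  have hforce := (hQ.tendsto_pow_mul_nonlinearity hF n).zero_mul_isBoundedUnder_le hv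
  have hmixed := (hQ.tendsto_pow_mul_deriv hF n).zero_mul_isBoundedUnder_le hv'
  rw [show (0 : ℝ) = n * 0 + 0 + 0 by ring]
  refine ((hfriction.add hforce).add hmixed).congr fun r => ?_
  rw [translationWronskian]
  ring

lemma strictMonoOn_translationWronskian (hQ : IsRadialGroundState n F Q) (hF : Differentiable ℝ F)
    (hST : IsSerrinTang F M) (hQM : Q 0 < M) (hn : 1 ≤ n)
    (hv : IsRadialLinearSol n (fun r => deriv F (Q r)) v) {D : Set ℝ} (hD : Convex ℝ D)
    (hD₀ : D ⊆ Ici 0) (hvD : ∀ r ∈ interior D, 0 < v r) :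
    StrictMonoOn (translationWronskian n F Q v) D := by
  have hpos : ∀ r ∈ interior D, 0 < r := fun r hr => by
    simpa only [interior_Ici, mem_Ioi] using interior_mono hD₀ hr
  refine strictMonoOn_of_hasDerivWithinAt_pos hD
    (hQ.continuous_translationWronskian hF.continuous hv).continuousOn
    (fun r hr => (hQ.hasDerivAt_translationWronskian hF hv (hpos r hr)).hasDerivWithinAt)
    fun r hr => neg_pos.2 ?_
  have := hpos r hr
  exact mul_neg_of_pos_of_neg (by positivity)
    (mul_neg_of_neg_of_pos (hQ.deriv_neg hF hST hQM this) (hvD r hr))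

lemma linearSol_growsExponentially_abs_of_dim_one (hQ : IsRadialGroundState 0 F Q)
    (hF : IsMassive F) (hST : IsSerrinTang F M) (hQM : Q 0 < M)
    (hv : IsRadialLinearSol 0 (fun r => deriv F (Q r)) v) (hv₀ : 0 < v 0) :
    GrowsExponentially fun r => |v r| := by
  obtain ⟨κ, hκ, hmass⟩ := hQ.eventually_deriv_nonlinearity_le hF
  rcases hv.growsExponentially_or_isBigO_one hκ hmass with hgrow | hgrow | ⟨hbdd, hbdd'⟩
  · exact hgrow.mono fun r => (min_le_left _ _).trans (le_abs_self _)
  · exact hgrow.mono fun r => (min_le_left _ _).trans (neg_le_abs _)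
  · have hmono : MonotoneOn (translationWronskian 0 F Q v) (Ici 0) := by
      refine monotoneOn_of_hasDerivWithinAt_nonneg (f' := 0) (convex_Ici 0)
        (hQ.continuous_translationWronskian hF.continuous hv).continuousOn (fun r hr => ?_)
        fun r _ => le_rfl
      rw [interior_Ici] at hr
      refine ((hQ.hasDerivAt_translationWronskian hF.differentiable hv hr).congr_deriv
        ?_).hasDerivWithinAt
      simp
    have hle := le_of_antitoneOn_Ici_of_tendsto hmono.neg
      (hQ.tendsto_translationWronskian hF hbdd hbdd').neg le_rfl
    have hpos : 0 < F (Q 0) * v 0 := mul_pos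
      (hQ.nonlinearity_pos_of_deriv_eq_zero hF.differentiable hST hQM le_rfl hQ.deriv_zero) hv₀
    have hzero : translationWronskian 0 F Q v 0 = F (Q 0) * v 0 := by
      simp [translationWronskian, hQ.deriv_zero]
    rw [neg_le_neg_iff, hzero] at hle
    exact absurd hle hpos.not_ge

lemma strictAntiOn_deriv_div (hQ : IsRadialGroundState n F Q)
    (hv : IsRadialLinearSol n (fun r => deriv F (Q r)) v) (hpos : ∀ r, 0 < r → 0 < v r)
    (hW : ∀ r, 0 < r → 0 < translationWronskian n F Q v r) :
    StrictAntiOn (fun r => deriv Q r / v r) (Ioi 0) := by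
  have hderiv : ∀ r, 0 < r → HasDerivAt (fun r => deriv Q r / v r)
      (-(translationWronskian n F Q v r / (r ^ n * v r ^ 2))) r := fun r hr => by
    have hvr : v r ≠ 0 := (hpos r hr).ne'
    refine ((hQ.hasDerivAt_deriv hr).div (hv.hasDerivAt r) hvr).congr_deriv ?_
    rw [translationWronskian_eq hr]
    field_simp
    ring
  refine strictAntiOn_of_hasDerivWithinAt_neg (convex_Ioi 0)
    (fun r hr => (hderiv r hr).continuousAt.continuousWithinAt)
    (fun r hr => (hderiv r (interior_subset hr)).hasDerivWithinAt) fun r hr => neg_lt_zero.2 ?_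
  have hr₀ : 0 < r := interior_subset hr
  have := hpos r hr₀
  have := hW r hr₀
  positivity

lemma exists_linearSol_nonpos (hQ : IsRadialGroundState n F Q) (hF : IsMassive F)
    (hST : IsSerrinTang F M) (hQM : Q 0 < M) (hn : 1 ≤ n)
    (hv : IsRadialLinearSol n (fun r => deriv F (Q r)) v) :
    ∃ r, 0 < r ∧ v r ≤ 0 := by
  by_contra! hpos
  have hmono : StrictMonoOn (translationWronskian n F Q v) (Ici 0) :=
    hQ.strictMonoOn_translationWronskian hF.differentiable hST hQM hn hv (convex_Ici 0) subset_rfl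
      fun r hr => hpos r (by simpa only [interior_Ici, mem_Ioi] using hr)
  obtain ⟨κ, hκ, hmass⟩ := hQ.eventually_deriv_nonlinearity_le hF
  rcases hv.growsExponentially_or_isBigO_one hκ hmass with hgrow | hgrow | ⟨hbdd, hbdd'⟩
  · have hanti := hQ.strictAntiOn_deriv_div hv hpos fun r hr => by
      simpa only [hQ.translationWronskian_zero hn] using hmono self_mem_Ici hr.le hr
    have hlim : Tendsto (fun r => deriv Q r / v r) atTop (𝓝 0) :=
      hQ.tendsto_deriv_zero.div_atTop (hgrow.mono fun r => min_le_left _ _).tendsto_atTop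
    have hlt : 0 < deriv Q 1 / v 1 :=
      lt_of_strictAntiOn_Ici_of_tendsto (f := fun r => deriv Q r / v r)
        (hanti.mono (Ici_subset_Ioi.2 one_pos)) hlim le_rfl
    exact hlt.not_ge (div_nonpos_of_nonpos_of_nonneg (hQ.deriv_nonpos zero_le_one)
      (hpos 1 one_pos).le)
  · have hlim : Tendsto (fun r => -v r) atTop atTop :=
      (hgrow.mono fun r => min_le_left _ _).tendsto_atTop
    obtain ⟨r, hr, hr₀⟩ := ((hlim.eventually_gt_atTop 0).and (eventually_gt_atTop 0)).exists
    exact (hpos r hr₀).not_gt (neg_pos.1 hr)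
  · have hlt := lt_of_strictAntiOn_Ici_of_tendsto hmono.neg
      (hQ.tendsto_translationWronskian hF hbdd hbdd').neg le_rfl
    rw [neg_lt_neg_iff, hQ.translationWronskian_zero hn] at hlt
    exact lt_irrefl 0 hlt

end Translation

end IsRadialGroundState

/-- The exponent `c` for which the scaling mode `r Q' + c Q` vanishes at the radius `ρ`. -/
def scalingExponent (Q : ℝ → ℝ) (ρ : ℝ) : ℝ := -(ρ * deriv Q ρ / Q ρ)

/-- The generator `r Q' + c Q` of the scaling `λ ↦ λᶜ Q(λ r)`. -/
def scalingMode (c : ℝ) (Q : ℝ → ℝ) (r : ℝ) : ℝ := r * deriv Q r + c * Q r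

/-- The Wronskian `rⁿ (φ' v - φ v')` of the scaling mode `φ = r Q' + c Q` with `v`, with `Q''`
eliminated by the radial equation. -/
def scalingWronskian (n : ℕ) (c : ℝ) (F Q v : ℝ → ℝ) (r : ℝ) : ℝ :=
  r ^ n * (((1 - n + c) * deriv Q r - r * F (Q r)) * v r - scalingMode c Q r * deriv v r)

lemma scalingWronskian_zero {n : ℕ} (hn : 1 ≤ n) (c : ℝ) (F Q v : ℝ → ℝ) :
    scalingWronskian n c F Q v 0 = 0 := by
  rw [scalingWronskian, zero_pow (Nat.one_le_iff_ne_zero.1 hn), zero_mul]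

namespace IsRadialGroundState

variable {n : ℕ} {F Q v : ℝ → ℝ} {M c r ρ τ : ℝ}

section Scaling

lemma scalingMode_eq_zero (hQ : IsRadialGroundState n F Q) (hρ : 0 ≤ ρ) :
    scalingMode (scalingExponent Q ρ) Q ρ = 0 := by
  have := (hQ.pos hρ).ne'
  rw [scalingMode, scalingExponent]
  field_simp
  ring

lemma scalingMode_neg (hQ : IsRadialGroundState n F Q) (hF : IsMassive F) (hST : IsSerrinTang F M)
    (hQM : Q 0 < M) (hn : 1 ≤ n) (hρ : 0 < ρ) (hρr : ρ < r) :
    scalingMode (scalingExponent Q ρ) Q r < 0 := by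
  have hr : 0 < r := hρ.trans hρr
  have hlt := hQ.strictAntiOn_mul_deriv_div hF hST hQM hn hρ hr hρr
  simp only [div_lt_iff₀ (hQ.pos hr.le)] at hlt
  rw [scalingMode, scalingExponent]
  linarith

lemma scalingExponent_pos (hQ : IsRadialGroundState n F Q) (hF : Differentiable ℝ F)
    (hST : IsSerrinTang F M) (hQM : Q 0 < M) (hρ : 0 < ρ) : 0 < scalingExponent Q ρ :=
  neg_pos.2 <| div_neg_of_neg_of_pos
    (mul_neg_of_pos_of_neg hρ (hQ.deriv_neg hF hST hQM hρ)) (hQ.pos hρ.le)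

lemma hasDerivAt_scalingWronskian (hQ : IsRadialGroundState n F Q) (hF : Differentiable ℝ F)
    (hv : IsRadialLinearSol n (fun r => deriv F (Q r)) v) (c : ℝ) (hr : 0 < r) :
    HasDerivAt (scalingWronskian n c F Q v)
      (r ^ n * (v r * (c * (Q r * deriv F (Q r)) - (c + 2) * F (Q r)))) r := by
  have hmode := ((hasDerivAt_id r).mul (hQ.hasDerivAt_deriv hr)).add
    ((hQ.hasDerivAt r).const_mul c)
  have hmode' := ((hQ.hasDerivAt_deriv hr).const_mul (1 - n + c)).sub
    ((hasDerivAt_id r).mul (hQ.hasDerivAt_comp hF r))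
  refine ((hasDerivAt_pow_of_ne_zero n hr.ne').mul ((hmode'.mul (hv.hasDerivAt r)).sub
    (hmode.mul (hv.hasDerivAt_deriv hr)))).congr_deriv ?_
  simp only [Pi.add_apply, Pi.sub_apply, Pi.mul_apply, id]
  field_simp
  ring

lemma continuous_scalingWronskian (hQ : IsRadialGroundState n F Q) (hF : Continuous F)
    (hv : IsRadialLinearSol n (fun r => deriv F (Q r)) v) (c : ℝ) :
    Continuous (scalingWronskian n c F Q v) := by
  have := hQ.continuous
  have := hQ.continuous_deriv
  have := hv.continuous
  have := hv.continuous_deriv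
  unfold scalingWronskian scalingMode
  fun_prop

lemma scalingWronskian_eq_zero (hQ : IsRadialGroundState n F Q) (hρ : 0 ≤ ρ) (hvρ : v ρ = 0) :
    scalingWronskian n (scalingExponent Q ρ) F Q v ρ = 0 := by
  rw [scalingWronskian, hQ.scalingMode_eq_zero hρ, hvρ]
  ring

lemma tendsto_scalingWronskian (hQ : IsRadialGroundState n F Q) (hF : IsMassive F) (c : ℝ)
    (hv : v =O[atTop] fun _ => (1 : ℝ)) (hv' : deriv v =O[atTop] fun _ => (1 : ℝ)) :
    Tendsto (scalingWronskian n c F Q v) atTop (𝓝 0) := by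
  have hmode : Tendsto (fun r => r ^ n * scalingMode c Q r) atTop (𝓝 0) := by
    have h := (hQ.tendsto_pow_mul_deriv hF (n + 1)).add ((hQ.tendsto_pow_mul hF n).const_mul c)
    rw [mul_zero, add_zero] at h
    refine h.congr fun r => ?_
    rw [scalingMode]
    ring
  have hmode' : Tendsto (fun r => r ^ n * ((1 - n + c) * deriv Q r - r * F (Q r))) atTop (𝓝 0) := by
    have h := ((hQ.tendsto_pow_mul_deriv hF n).const_mul (1 - n + c)).sub
      (hQ.tendsto_pow_mul_nonlinearity hF (n + 1))
    rw [mul_zero, sub_zero] at h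
    refine h.congr fun r => ?_
    ring
  have h := (hmode'.zero_mul_isBoundedUnder_le ((isBigO_one_iff ℝ).1 hv)).sub
    (hmode.zero_mul_isBoundedUnder_le ((isBigO_one_iff ℝ).1 hv'))
  rw [sub_zero] at h
  refine h.congr fun r => ?_
  rw [scalingWronskian]
  ring

lemma exists_linearSol_first_zero (hQ : IsRadialGroundState n F Q) (hF : IsMassive F)
    (hST : IsSerrinTang F M) (hQM : Q 0 < M) (hn : 1 ≤ n)
    (hv : IsRadialLinearSol n (fun r => deriv F (Q r)) v) (hv₀ : 0 < v 0) :
    ∃ ρ, 0 < ρ ∧ v ρ = 0 ∧ deriv v ρ < 0 ∧ ∀ r ∈ Ico 0 ρ, 0 < v r := by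
  obtain ⟨R, hR, hvR⟩ := hQ.exists_linearSol_nonpos hF hST hQM hn hv
  obtain ⟨ρ, ⟨hρ, -⟩, hvρ, hpos⟩ :=
    exists_first_zero hv.continuous.continuousOn hR.le hv₀ hvR
  refine ⟨ρ, hρ, hvρ, ?_, hpos⟩
  have hmono := hQ.strictMonoOn_translationWronskian hF.differentiable hST hQM hn hv
    (convex_Icc 0 ρ) Icc_subset_Ici_self fun r hr => hpos r (Ioo_subset_Ico_self
      (by simpa only [interior_Icc] using hr))
  have hW := hmono (left_mem_Icc.2 hρ.le) (right_mem_Icc.2 hρ.le) hρ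
  rw [hQ.translationWronskian_zero hn, translationWronskian, hvρ, mul_zero, mul_zero, mul_zero,
    zero_add, zero_add] at hW
  exact neg_of_mul_pos_right (pos_of_mul_pos_right hW (pow_nonneg hρ.le n))
    (hQ.deriv_neg hF.differentiable hST hQM hρ).le

-- By Rolle, the source `c Q F'(Q) - (c + 2) F(Q)` vanishes somewhere on `(0, ρ)`, and it changes
-- sign only once.
lemma scalingSource_pos (hQ : IsRadialGroundState n F Q) (hF : Differentiable ℝ F)
    (hST : IsSerrinTang F M) (hQM : Q 0 < M) (hn : 1 ≤ n)
    (hv : IsRadialLinearSol n (fun r => deriv F (Q r)) v) (hρ : 0 < ρ) (hvρ : v ρ = 0)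
    (hpos : ∀ r ∈ Ico 0 ρ, 0 < v r) (hρr : ρ ≤ r) :
    0 < scalingExponent Q ρ * (Q r * deriv F (Q r)) - (scalingExponent Q ρ + 2) * F (Q r) := by
  have hc : 0 < scalingExponent Q ρ := hQ.scalingExponent_pos hF hST hQM hρ
  obtain ⟨z, hz, hsource⟩ := exists_hasDerivAt_eq_zero hρ
    (hQ.continuous_scalingWronskian hF.continuous hv _).continuousOn
    ((scalingWronskian_zero hn _ F Q v).trans (hQ.scalingWronskian_eq_zero hρ.le hvρ).symm)
    fun r hr => hQ.hasDerivAt_scalingWronskian hF hv _ hr.1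
  rw [mul_eq_zero_iff_left (pow_pos hz.1 n).ne',
    mul_eq_zero_iff_left (hpos z (Ioo_subset_Ico_self hz)).ne'] at hsource
  have hzr : z < r := hz.2.trans_le hρr
  by_contra! hle
  have hr : 0 ≤ r := (hz.1.trans hzr).le
  have hlt := hST.mul_deriv_lt hc.le (by linarith) (by linarith) (hQ.pos hr)
    (hQ.strictAntiOn hz.1.le hr hzr) (hQ.mem_Ioo hQM hz.1.le).2 (sub_nonpos.1 hle)
  exact hlt.ne (sub_eq_zero.1 hsource)

lemma strictAntiOn_scalingWronskian (hQ : IsRadialGroundState n F Q) (hF : Differentiable ℝ F)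
    (hST : IsSerrinTang F M) (hQM : Q 0 < M) (hn : 1 ≤ n)
    (hv : IsRadialLinearSol n (fun r => deriv F (Q r)) v) (hρ : 0 < ρ) (hvρ : v ρ = 0)
    (hpos : ∀ r ∈ Ico 0 ρ, 0 < v r) {D : Set ℝ} (hD : Convex ℝ D) (hρD : D ⊆ Ici ρ)
    (hneg : ∀ r ∈ interior D, v r < 0) :
    StrictAntiOn (scalingWronskian n (scalingExponent Q ρ) F Q v) D := by
  have hρr : ∀ r ∈ interior D, ρ ≤ r := fun r hr => hρD (interior_subset hr)
  refine strictAntiOn_of_hasDerivWithinAt_neg hD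
    (hQ.continuous_scalingWronskian hF.continuous hv _).continuousOn
    (fun r hr => (hQ.hasDerivAt_scalingWronskian hF hv _
      (hρ.trans_le (hρr r hr))).hasDerivWithinAt) fun r hr => ?_
  exact mul_neg_of_pos_of_neg (pow_pos (hρ.trans_le (hρr r hr)) n) <| mul_neg_of_neg_of_pos
    (hneg r hr) (hQ.scalingSource_pos hF hST hQM hn hv hρ hvρ hpos (hρr r hr))

lemma deriv_linearSol_neg_of_next_zero (hQ : IsRadialGroundState n F Q) (hF : IsMassive F)
    (hST : IsSerrinTang F M) (hQM : Q 0 < M) (hn : 1 ≤ n)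
    (hv : IsRadialLinearSol n (fun r => deriv F (Q r)) v) (hρ : 0 < ρ) (hvρ : v ρ = 0)
    (hpos : ∀ r ∈ Ico 0 ρ, 0 < v r) (hρτ : ρ < τ) (hvτ : v τ = 0)
    (hneg : ∀ r ∈ Ioo ρ τ, v r < 0) : deriv v τ < 0 := by
  have hanti := hQ.strictAntiOn_scalingWronskian hF.differentiable hST hQM hn hv hρ hvρ hpos
    (convex_Icc ρ τ) Icc_subset_Ici_self fun r hr => hneg r (by simpa only [interior_Icc] using hr)
  have hW := hanti (left_mem_Icc.2 hρτ.le) (right_mem_Icc.2 hρτ.le) hρτ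
  rw [hQ.scalingWronskian_eq_zero hρ.le hvρ, scalingWronskian, hvτ, mul_zero, zero_sub] at hW
  have hmode : 0 < scalingMode (scalingExponent Q ρ) Q τ * deriv v τ :=
    neg_lt_zero.1 (neg_of_mul_neg_right hW (pow_nonneg (hρ.trans hρτ).le n))
  exact neg_of_mul_pos_right hmode (hQ.scalingMode_neg hF hST hQM hn hρ hρτ).le

lemma linearSol_neg_of_first_zero (hQ : IsRadialGroundState n F Q) (hF : IsMassive F)
    (hST : IsSerrinTang F M) (hQM : Q 0 < M) (hn : 1 ≤ n)
    (hv : IsRadialLinearSol n (fun r => deriv F (Q r)) v) (hρ : 0 < ρ) (hvρ : v ρ = 0)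
    (hvρ' : deriv v ρ < 0) (hpos : ∀ r ∈ Ico 0 ρ, 0 < v r) (hρr : ρ < r) : v r < 0 := by
  by_contra! hvr
  obtain ⟨s, hρs, hvs⟩ := mem_nhdsGT_iff_exists_Ioc_subset.1
    (eventually_neg_nhdsGT_of_deriv_neg hvρ' hvρ)
  have hsr : s < r := not_le.1 fun hrs => hvr.not_gt (hvs ⟨hρr, hrs⟩)
  obtain ⟨τ, ⟨hsτ, -⟩, hvτ, hneg⟩ := exists_first_zero hv.continuous.neg.continuousOn hsr.le
    (neg_pos.2 (hvs (right_mem_Ioc.2 hρs))) (neg_nonpos.2 hvr)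
  have hneg : ∀ t ∈ Ioo ρ τ, v t < 0 := fun t ht => (le_or_gt t s).elim
    (fun hts => hvs ⟨ht.1, hts⟩) fun hst => neg_pos.1 (hneg t ⟨hst.le, ht.2⟩)
  have hρτ : ρ < τ := hρs.trans hsτ
  have hvτ : v τ = 0 := neg_eq_zero.1 hvτ
  have hvτ' : deriv v τ < 0 :=
    hQ.deriv_linearSol_neg_of_next_zero hF hST hQM hn hv hρ hvρ hpos hρτ hvτ hneg
  obtain ⟨t, hvt, ht⟩ :=
    ((eventually_pos_nhdsLT_of_deriv_neg hvτ' hvτ).and (Ioo_mem_nhdsLT hρτ)).exists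
  exact hvt.not_gt (hneg t ht)

lemma linearSol_growsExponentially_neg (hQ : IsRadialGroundState n F Q) (hF : IsMassive F)
    (hST : IsSerrinTang F M) (hQM : Q 0 < M) (hn : 1 ≤ n)
    (hv : IsRadialLinearSol n (fun r => deriv F (Q r)) v) (hv₀ : 0 < v 0) :
    GrowsExponentially fun r => min (-v r) (-deriv v r) := by
  obtain ⟨ρ, hρ, hvρ, hvρ', hpos⟩ := hQ.exists_linearSol_first_zero hF hST hQM hn hv hv₀
  have hneg : ∀ r, ρ < r → v r < 0 := fun r hr =>
    hQ.linearSol_neg_of_first_zero hF hST hQM hn hv hρ hvρ hvρ' hpos hr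
  obtain ⟨κ, hκ, hmass⟩ := hQ.eventually_deriv_nonlinearity_le hF
  rcases hv.growsExponentially_or_isBigO_one hκ hmass with hgrow | hgrow | ⟨hbdd, hbdd'⟩
  · have hlim : Tendsto v atTop atTop := (hgrow.mono fun r => min_le_left _ _).tendsto_atTop
    obtain ⟨r, hr, hρr⟩ := ((hlim.eventually_gt_atTop 0).and (eventually_gt_atTop ρ)).exists
    exact absurd hr (hneg r hρr).not_gt
  · exact hgrow
  · have hanti := hQ.strictAntiOn_scalingWronskian hF.differentiable hST hQM hn hv hρ hvρ hpos
      (convex_Ici ρ) subset_rfl fun r hr => hneg r (by simpa only [interior_Ici, mem_Ioi] using hr)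
    have hlt := lt_of_strictAntiOn_Ici_of_tendsto hanti
      (hQ.tendsto_scalingWronskian hF _ hbdd hbdd') le_rfl
    rw [hQ.scalingWronskian_eq_zero hρ.le hvρ] at hlt
    exact absurd hlt (lt_irrefl 0)

end Scaling

end IsRadialGroundState

theorem nondegeneracy_of_ground_state_general {n : ℕ} {F Q v : ℝ → ℝ} {M : ℝ} (hF : IsMassive F)
    (hST : IsSerrinTang F M) (hQ : IsRadialGroundState n F Q) (hQM : Q 0 < M)
    (hv : IsRadialLinearSol n (fun r => deriv F (Q r)) v) (hv₀ : 0 < v 0) :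
    (∃ c > (0 : ℝ), ∃ ε > (0 : ℝ), ∀ᶠ r in atTop, c * exp (ε * r) ≤ |v r|) ∧
    (1 ≤ n → ∃ c > (0 : ℝ), ∃ ε > (0 : ℝ), ∀ᶠ r in atTop,
      v r ≤ -c * exp (ε * r) ∧ deriv v r ≤ -c * exp (ε * r)) := by
  constructor
  · rcases n.eq_zero_or_pos with rfl | hn
    · exact hQ.linearSol_growsExponentially_abs_of_dim_one hF hST hQM hv hv₀
    · exact (hQ.linearSol_growsExponentially_neg hF hST hQM hn hv hv₀).mono fun r =>
        (min_le_left _ _).trans (neg_le_abs _)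
  · intro hn
    obtain ⟨c, hc, ε, hε, h⟩ := hQ.linearSol_growsExponentially_neg hF hST hQM hn hv hv₀
    refine ⟨c, hc, ε, hε, h.mono fun r hr => ?_⟩
    obtain ⟨hv, hv'⟩ := le_min_iff.1 hr
    rw [neg_mul]
    exact ⟨le_neg.1 hv, le_neg.1 hv'⟩

section SineNonlinearity

/-- The nonlinearity `Fnl` in the variable `t = 2x`, up to a constant factor. -/
def sineNonlinearity (k t : ℝ) : ℝ := sin t * (k - cos t)

variable {k t : ℝ}

lemma hasDerivAt_sineNonlinearity (k t : ℝ) :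
    HasDerivAt (sineNonlinearity k) (cos t * (k - cos t) + sin t * sin t) t := by
  refine ((hasDerivAt_sin t).mul ((hasDerivAt_cos t).const_sub k)).congr_deriv ?_
  rw [neg_neg]

lemma mul_cos_lt_sin (ht : t ∈ Ioo 0 π) : t * cos t < sin t := by
  have hmono : StrictMonoOn (fun s => sin s - s * cos s) (Icc 0 π) := by
    refine strictMonoOn_of_hasDerivWithinAt_pos (f' := fun s => s * sin s) (convex_Icc 0 π)
      (by fun_prop) (fun s _ => ?_) fun s hs => ?_
    · refine (((hasDerivAt_sin s).sub
        ((hasDerivAt_id s).mul (hasDerivAt_cos s))).congr_deriv ?_).hasDerivWithinAt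
      simp only [id]
      ring
    · rw [interior_Icc] at hs
      exact mul_pos hs.1 (sin_pos_of_mem_Ioo hs)
  simpa using hmono (left_mem_Icc.2 pi_nonneg) (Ioo_subset_Icc_self ht) ht.1

lemma strictAntiOn_mul_cos_div_sin : StrictAntiOn (fun t => t * (cos t / sin t)) (Ioo 0 π) := by
  have hderiv : ∀ t ∈ Ioo 0 π, HasDerivAt (fun t => t * (cos t / sin t))
      (-(t - sin t * cos t) / sin t ^ 2) t := fun t ht => by
    have hsin : sin t ≠ 0 := (sin_pos_of_mem_Ioo ht).ne'
    refine ((hasDerivAt_id t).mul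
      ((hasDerivAt_cos t).div (hasDerivAt_sin t) hsin)).congr_deriv ?_
    simp only [id, Pi.div_apply]
    field_simp
    linear_combination -t * sin_sq_add_cos_sq t
  refine strictAntiOn_of_hasDerivWithinAt_neg (convex_Ioo 0 π)
    (fun t ht => (hderiv t ht).continuousAt.continuousWithinAt)
    (fun t ht => (hderiv t (interior_subset ht)).hasDerivWithinAt) fun t ht => ?_
  have ht := interior_subset ht
  have hsin := sin_pos_of_mem_Ioo ht
  have hnum : 0 < t - sin t * cos t := by
    have := sin_lt (mul_pos two_pos ht.1)
    rw [sin_two_mul] at this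
    linarith
  exact div_neg_of_neg_of_pos (neg_lt_zero.2 hnum) (by positivity)

lemma mul_one_sub_mul_cos_sub_pos (hk : 0 ≤ k) (hk₁ : k < 1) (ht : 0 < t) :
    0 < t * (1 - k * cos t) - sin t * (k - cos t) := by
  have hsin_two : 0 < t + sin t * cos t := by
    have := (abs_lt.1 (abs_sin_lt_abs (mul_pos two_pos ht).ne')).1
    rw [sin_two_mul, abs_of_pos (mul_pos two_pos ht)] at this
    linarith
  have hsin : 0 ≤ (t - sin t) * (1 - cos t) :=
    mul_nonneg (sub_nonneg.2 (sin_lt ht).le) (sub_nonneg.2 (cos_le_one t))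
  calc 0 < k * ((t - sin t) * (1 - cos t)) + (1 - k) * (t + sin t * cos t) :=
        add_pos_of_nonneg_of_pos (mul_nonneg hk hsin) (mul_pos (sub_pos.2 hk₁) hsin_two)
    _ = t * (1 - k * cos t) - sin t * (k - cos t) := by ring

lemma strictAntiOn_mul_sin_div (hk : 0 ≤ k) (hk₁ : k < 1) :
    StrictAntiOn (fun t => t * (sin t / (k - cos t))) {t ∈ Ioo 0 π | 0 < k - cos t} := by
  have hderiv : ∀ t, 0 < k - cos t → HasDerivAt (fun t => t * (sin t / (k - cos t)))
      (-(t * (1 - k * cos t) - sin t * (k - cos t)) / (k - cos t) ^ 2) t := fun t ht => by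
    refine ((hasDerivAt_id t).mul
      ((hasDerivAt_sin t).div ((hasDerivAt_cos t).const_sub k) ht.ne')).congr_deriv ?_
    simp only [id, Pi.div_apply]
    field_simp
    linear_combination -t * sin_sq_add_cos_sq t
  intro s ⟨hs, hsk⟩ t ⟨ht, _⟩ hst
  have hpos : ∀ r ∈ Icc s t, 0 < k - cos r := fun r hr => hsk.trans_le <|
    sub_le_sub_left (cos_le_cos_of_nonneg_of_le_pi hs.1.le (hr.2.trans ht.2.le) hr.1) k
  refine strictAntiOn_of_hasDerivWithinAt_neg (convex_Icc s t)
    (fun r hr => (hderiv r (hpos r hr)).continuousAt.continuousWithinAt)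
    (fun r hr => (hderiv r (hpos r (interior_subset hr))).hasDerivWithinAt) (fun r hr => ?_)
    (left_mem_Icc.2 hst.le) (right_mem_Icc.2 hst.le) hst
  have hr := interior_subset hr
  exact div_neg_of_neg_of_pos
    (neg_lt_zero.2 (mul_one_sub_mul_cos_sub_pos hk hk₁ (hs.1.trans_le hr.1)))
    (pow_pos (hpos r hr) 2)

lemma isSerrinTang_sineNonlinearity (hk : 0 ≤ k) (hk₁ : k < 1) :
    IsSerrinTang (sineNonlinearity k) π where
  lt_mul_deriv t ht hle := by
    have hsin := sin_pos_of_mem_Ioo ht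
    have hkcos : k - cos t ≤ 0 := nonpos_of_mul_nonpos_right hle hsin
    rw [(hasDerivAt_sineNonlinearity k t).deriv, sineNonlinearity]
    calc sin t * (k - cos t) ≤ t * cos t * (k - cos t) :=
          mul_le_mul_of_nonpos_right (mul_cos_lt_sin ht).le hkcos
      _ < t * cos t * (k - cos t) + t * (sin t * sin t) :=
          lt_add_of_pos_right _ (mul_pos ht.1 (mul_pos hsin hsin))
      _ = t * (cos t * (k - cos t) + sin t * sin t) := by ring
  pos_of_nonneg s t hs hst ht hnonneg := by
    have hks : 0 ≤ k - cos s :=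
      nonneg_of_mul_nonneg_right hnonneg (sin_pos_of_pos_of_lt_pi hs (hst.trans ht))
    have hcos : cos t < cos s := cos_lt_cos_of_nonneg_of_le_pi hs.le ht.le hst
    exact mul_pos (sin_pos_of_pos_of_lt_pi (hs.trans hst) ht) (by linarith)
  strictAntiOn := by
    have hpos : ∀ t ∈ {t ∈ Ioo 0 π | 0 < sineNonlinearity k t}, 0 < k - cos t := fun t ht =>
      pos_of_mul_pos_right ht.2 (sin_pos_of_mem_Ioo ht.1).le
    refine ((strictAntiOn_mul_cos_div_sin.mono fun t ht => ht.1).add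
      ((strictAntiOn_mul_sin_div hk hk₁).mono fun t ht => ⟨ht.1, hpos t ht⟩)).congr fun t ht => ?_
    have hsin := (sin_pos_of_mem_Ioo ht.1).ne'
    have hkcos := (hpos t ht).ne'
    simp only [(hasDerivAt_sineNonlinearity k t).deriv, sineNonlinearity]
    field_simp

end SineNonlinearity

section Fnl

variable {a b : ℝ}

lemma Fnl_eq_sineNonlinearity (a b : ℝ) :
    Fnl a b = fun x => a / 4 * sineNonlinearity (1 - 2 * (b / a)) (2 * x) := by
  funext x
  simp only [Fnl, sineNonlinearity, cos_two_mul, sin_sq]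
  ring

lemma isSerrinTang_Fnl (hb : 0 < b) (hab : 2 * b < a) : IsSerrinTang (Fnl a b) (π / 2) := by
  have ha : 0 < a := by linarith
  have hba : b / a < 1 / 2 := (div_lt_iff₀ ha).2 (by linarith)
  have hba₀ : 0 < b / a := div_pos hb ha
  rw [Fnl_eq_sineNonlinearity]
  exact (isSerrinTang_sineNonlinearity (by linarith) (by linarith)).const_mul_comp_mul
    (by positivity) two_pos

lemma isMassive_Fnl (ha : a ≠ 0) (hb : 0 < b) : IsMassive (Fnl a b) where
  contDiff := by unfold Fnl; fun_prop
  map_zero := by simp [Fnl]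
  deriv_zero_neg := by
    rw [Fnl_eq_sineNonlinearity, deriv_const_mul_field,
      deriv_comp_mul_left, (hasDerivAt_sineNonlinearity _ _).deriv, mul_zero, cos_zero, sin_zero,
      smul_eq_mul]
    field_simp
    linarith

lemma potential_Fnl (ha : a ≠ 0) (b x : ℝ) :
    potential (Fnl a b) x = a / 4 * sin x ^ 4 - b / 2 * sin x ^ 2 := by
  have hderiv : ∀ x, HasDerivAt (fun x => a / 4 * sin x ^ 4 - b / 2 * sin x ^ 2) (Fnl a b x) x :=
    fun x => by
      refine ((((hasDerivAt_sin x).pow 4).const_mul (a / 4)).sub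
        (((hasDerivAt_sin x).pow 2).const_mul (b / 2))).congr_deriv ?_
      rw [Fnl, sin_two_mul]
      field_simp
      ring
  have hcont : Continuous (Fnl a b) := by unfold Fnl; fun_prop
  rw [potential, intervalIntegral.integral_eq_sub_of_hasDerivAt (fun x _ => hderiv x)
    (hcont.intervalIntegrable 0 x)]
  simp

lemma potential_Fnl_le_pi_div_two (hb : 0 < b) (hab : 2 * b < a) (x : ℝ) :
    potential (Fnl a b) x ≤ potential (Fnl a b) (π / 2) := by
  have ha : 0 < a := by linarith
  simp only [potential_Fnl ha.ne', sin_pi_div_two, one_pow, mul_one]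
  have hfactor : 0 ≤ (1 - sin x ^ 2) * (a * sin x ^ 2 + (a - 2 * b)) :=
    mul_nonneg (sub_nonneg.2 (sin_sq_le_one x)) (by nlinarith [sq_nonneg (sin x)])
  linear_combination hfactor / 4

lemma Fnl_pi_div_two (a b : ℝ) : Fnl a b (π / 2) = 0 := by
  rw [Fnl, mul_div_cancel₀ π two_ne_zero, sin_pi, mul_zero, zero_mul]

lemma IsRadialSol.isRadialGroundState {n : ℕ} {Q : ℝ → ℝ} (hQ : IsRadialSol (n + 1) a b Q)
    (hanti : StrictAntiOn Q (Ici 0)) (hlim : Tendsto Q atTop (𝓝 0))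
    (hlim' : Tendsto (deriv Q) atTop (𝓝 0)) : IsRadialGroundState n (Fnl a b) Q where
  contDiff := hQ.1
  deriv_zero := hQ.2.1
  ode r hr := by simpa using hQ.2.2 r hr
  strictAntiOn := hanti
  tendsto_zero := hlim
  tendsto_deriv_zero := hlim'

lemma IsLinearizedSol.isRadialLinearSol {n : ℕ} {w v : ℝ → ℝ}
    (hv : IsLinearizedSol (n + 1) a b w v) :
    IsRadialLinearSol n (fun r => deriv (Fnl a b) (w r)) v where
  contDiff := hv.1
  ode r hr := by simpa using hv.2.2.2 r hr

lemma IsRadialGroundState.apply_zero_lt_pi_div_two {n : ℕ} {Q : ℝ → ℝ}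
    (hQ : IsRadialGroundState n (Fnl a b) Q) (hb : 0 < b) (hab : 2 * b < a) : Q 0 < π / 2 :=
  hQ.apply_zero_lt_of_forall_potential_le (isMassive_Fnl (by linarith) hb).contDiff (by positivity)
    (Fnl_pi_div_two a b) (potential_Fnl_le_pi_div_two hb hab)

end Fnl

theorem nondegeneracy_of_ground_state (d : ℕ) (hd : 1 ≤ d) (a b : ℝ)
    (hb : 0 < b) (hab : 2 * b < a)
    (Q : ℝ → ℝ) (hQ : IsRadialSol d a b Q)
    (hQpos : ∀ r : ℝ, 0 ≤ r → 0 < Q r)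
    (hQdec : StrictAntiOn Q (Set.Ici 0))
    (hQlim : Tendsto Q atTop (nhds 0))
    (hQlim' : Tendsto (deriv Q) atTop (nhds 0))
    (v : ℝ → ℝ) (hv : IsLinearizedSol d a b Q v) :
    (∃ c > (0 : ℝ), ∃ ε > (0 : ℝ), ∀ᶠ r in atTop, c * Real.exp (ε * r) ≤ |v r|) ∧
    (2 ≤ d → ∃ c > (0 : ℝ), ∃ ε > (0 : ℝ), ∀ᶠ r in atTop,
      v r ≤ -c * Real.exp (ε * r) ∧ deriv v r ≤ -c * Real.exp (ε * r)) := by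
  obtain ⟨n, rfl⟩ := Nat.exists_eq_add_of_le' hd
  have hQ : IsRadialGroundState n (Fnl a b) Q := hQ.isRadialGroundState hQdec hQlim hQlim'
  have hQ₀ : Q 0 < π / 2 := hQ.apply_zero_lt_pi_div_two hb hab
  obtain ⟨habs, hneg⟩ := nondegeneracy_of_ground_state_general (isMassive_Fnl (by linarith) hb)
    (isSerrinTang_Fnl hb hab) hQ hQ₀ hv.isRadialLinearSol (hv.2.1.symm ▸ one_pos)
  exact ⟨habs, fun hd => hneg (Nat.le_of_succ_le_succ hd)⟩
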